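/- arXiv:2210.02066 — 3 statements merged into one kernel-verified Lean document; each statement's English description precedes it below -/
import Mathlib

section
/- For every m ≥ 1 there exists a constant C_m > 0 such that for every multi-index J ∈ {0,…,n−1}^m one has |X_J (cosh ∘ r)| ≤ C_m cosh r at every point of S. -/
/-!
Write `s = √a`. Since `cosh r = 2 cosh²(r/2) - 1`, the function `cosh ∘ r` is a linear combination of
monomials `s ^ k x ^ α z ^ β` with `k ≥ -2` and `k + |α| + 2|β| ≤ 2`. This class is stable under
every `X_j`: the field `X_0` multiplies such a monomial by `k / 2`, while the others raise the power
of `s` by exactly as much as they lower the weighted degree `|α| + 2|β|` (multiplication by `x_j`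
together with `∂_{z_k}` lowers it by `2 - 1 = 1`); see `Full.Xf`.

Every member of the class is `O(cosh r)`. With the homogeneous size
`N = ((1 + |x|²/4)² + |z|²)^{1/4} ≥ 1`, a monomial of the class is bounded by a multiple of
`s ^ k N ^ (2 - k)` with `-2 ≤ k ≤ 2`, hence of `s² + N⁴ / s²`, and the latter is at most
`4 cosh²(r/2) ≤ 4 cosh r`; see `Full.bound`. As there are finitely many multi-indices of a given
length, the constants can be chosen uniformly.
-/

open Real MeasureTheory Filter Topology

noncomputable section

namespace DR

/-- The operator `𝓡 g (r) = (1 / sinh r) g'(r)`. -/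
def Rop (g : ℝ → ℝ) : ℝ → ℝ := fun r => (1 / Real.sinh r) * deriv g r

/-- The operator `-(1 / sinh r) d/dr`. -/
def D1 (g : ℝ → ℝ) : ℝ → ℝ := fun r => -(1 / Real.sinh r) * deriv g r

/-- The operator `-(1 / sinh (r/2)) d/dr`. -/
def D2 (g : ℝ → ℝ) : ℝ → ℝ := fun r => -(1 / Real.sinh (r / 2)) * deriv g r

/-- The Gaussian `e^{-r²/(4t)}`. -/
def gauss (t : ℝ) : ℝ → ℝ := fun r => Real.exp (-r ^ 2 / (4 * t))

/-- `Q = (μ + 2ν)/2`. -/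
def Qc (μ ν : ℕ) : ℝ := ((μ : ℝ) + 2 * ν) / 2

/-- `c_k = 2^{-μ-ν/2-1-k} π^{-n/2}` with `n = μ+ν+1`. -/
def cc (μ ν k : ℕ) : ℝ :=
  (2 : ℝ) ^ (-(μ : ℝ) - (ν : ℝ) / 2 - 1 - (k : ℝ)) *
    Real.pi ^ (-(((μ : ℝ) + ν + 1)) / 2)

/-- The Damek–Ricci heat kernel `h_t`. -/
def heat (μ ν : ℕ) (t : ℝ) : ℝ → ℝ := fun r =>
  if Even ν then
    cc μ ν 0 * t ^ (-(1 : ℝ) / 2) * Real.exp (-(Qc μ ν) ^ 2 * t / 4) *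
      (D1^[ν / 2] (D2^[μ / 2] (gauss t))) r
  else
    cc μ ν 0 * Real.pi ^ (-(1 : ℝ) / 2) * t ^ (-(1 : ℝ) / 2) *
      Real.exp (-(Qc μ ν) ^ 2 * t / 4) *
      ∫ s in Set.Ioi r, (Real.sinh s / Real.sqrt (Real.cosh s - Real.cosh r)) *
        (D1^[(ν + 1) / 2] (D2^[μ / 2] (gauss t))) s

/-- `Ψ_k(r,t)`. -/
def Psi (k : ℕ) (r t : ℝ) : ℝ :=
  if 1 < r ∨ Even k then (1 + 1 / Real.sqrt t + r / t) ^ k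
  else r * (1 + 1 / Real.sqrt t + r / t) ^ (k - 1) * (1 + 1 / t)

/-- `Ψ̃_k(r,t)`. -/
def PsiT (k : ℕ) (r t : ℝ) : ℝ :=
  if 1 < r ∨ Even k then (1 + 1 / Real.sqrt t + r / t) ^ k
  else (1 + 1 / Real.sqrt t + r / t) ^ (k - 1) * (1 + r / t)

/-- `p_{a,b}(r) = sinh^a r cosh^b r`. -/
def pab (a b : ℕ) (r : ℝ) : ℝ := Real.sinh r ^ a * Real.cosh r ^ b

/-- `Θ_{p,q}(r)` (with real exponents, via `rpow`). -/
def Theta (p q : ℝ) (r : ℝ) : ℝ :=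
  ((r / (1 + r)) * (Real.exp (r / 2) / (2 * Real.sinh (r / 2)))) ^ p *
    ((r / (1 + 2 * r)) * (Real.exp r / Real.sinh r)) ^ q

/-- Points of `S = ℝ^μ × ℝ^ν × (0,∞)` (the last coordinate ranges over `ℝ`;
statements are always restricted to `0 < a`). -/
abbrev Pt (μ ν : ℕ) := (Fin μ → ℝ) × (Fin ν → ℝ) × ℝ

/-- The quantity `((√a + 1/√a)/2 + |x|²/(8√a))² + |z|²/(4a)`, equal to `cosh²(r/2)`. -/
def coshExpr (μ ν : ℕ) (p : Pt μ ν) : ℝ :=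
  ((Real.sqrt p.2.2 + (Real.sqrt p.2.2)⁻¹) / 2 +
      (Real.sqrt p.2.2)⁻¹ * (∑ i, p.1 i ^ 2) / 8) ^ 2 +
    (p.2.2)⁻¹ * (∑ i, p.2.1 i ^ 2) / 4

/-- The vector field `X_0 = a ∂_a`. -/
def X0op (μ ν : ℕ) (f : Pt μ ν → ℝ) : Pt μ ν → ℝ :=
  fun p => p.2.2 * deriv (fun s => f (p.1, p.2.1, s)) p.2.2

/-- The vector fields `X_j`, `j ∈ {0, …, n-1}`, `n = μ+ν+1`:
`X_0 = a ∂_a`, `X_ℓ = √a (∂_{x_ℓ} + (1/2) Σ_k (J_k x, e_ℓ) ∂_{z_k})` for `ℓ = 1,…,μ`,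
and `X_{μ+k} = a ∂_{z_k}` for `k = 1,…,ν`. -/
def Xf (μ ν : ℕ) (Jm : Fin ν → Matrix (Fin μ) (Fin μ) ℝ) (j : Fin (μ + ν + 1))
    (f : Pt μ ν → ℝ) : Pt μ ν → ℝ := fun p =>
  if h0 : (j : ℕ) = 0 then p.2.2 * deriv (fun s => f (p.1, p.2.1, s)) p.2.2
  else if hm : (j : ℕ) ≤ μ then
    Real.sqrt p.2.2 *
      (deriv (fun s => f (Function.update p.1 ⟨(j : ℕ) - 1, by omega⟩ s, p.2.1, p.2.2))
          (p.1 ⟨(j : ℕ) - 1, by omega⟩) +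
        (1 / 2) * ∑ k : Fin ν, (Jm k).mulVec p.1 ⟨(j : ℕ) - 1, by omega⟩ *
          deriv (fun s => f (p.1, Function.update p.2.1 k s, p.2.2)) (p.2.1 k))
  else
    p.2.2 *
      deriv (fun s =>
          f (p.1, Function.update p.2.1 ⟨(j : ℕ) - μ - 1, by have := j.isLt; omega⟩ s, p.2.2))
        (p.2.1 ⟨(j : ℕ) - μ - 1, by have := j.isLt; omega⟩)

/-- `X_J = X_{J_1} X_{J_2} ⋯ X_{J_k}` for a multi-index `J`. -/
def XL (μ ν : ℕ) (Jm : Fin ν → Matrix (Fin μ) (Fin μ) ℝ) :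
    List (Fin (μ + ν + 1)) → (Pt μ ν → ℝ) → Pt μ ν → ℝ
  | [], f => f
  | j :: L, f => Xf μ ν Jm j (XL μ ν Jm L f)

/-- `Cl k d f`: the function `f` is `(√a) ^ k` times a polynomial in `(x, z)` of weighted degree at
most `d`, where each `x_i` has weight `1` and each `z_i` has weight `2`. The degree is an integer,
and only the zero function has negative degree, so that derivatives lower the degree by exactly
the weight without truncation. -/
inductive Cl {μ ν : ℕ} (k : ℤ) : ℤ → (Pt μ ν → ℝ) → Prop
  | zero (d : ℤ) : Cl k d (fun _ => 0)
  | pow (d : ℤ) (c : ℝ) (hd : 0 ≤ d) : Cl k d (fun p => c * Real.sqrt p.2.2 ^ k)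
  | add {d : ℤ} {f g : Pt μ ν → ℝ} (hf : Cl k d f) (hg : Cl k d g) :
      Cl k d (fun p => f p + g p)
  | mulx {d : ℤ} {f : Pt μ ν → ℝ} (i : Fin μ) (hf : Cl k d f) :
      Cl k (d + 1) (fun p => p.1 i * f p)
  | mulz {d : ℤ} {f : Pt μ ν → ℝ} (i : Fin ν) (hf : Cl k d f) :
      Cl k (d + 2) (fun p => p.2.1 i * f p)

/-- The homogeneous size `N = ((1 + |x|²/4)² + |z|²)^{1/4}`, which has the weight of `x`. -/
def Nrm {μ ν : ℕ} (p : Pt μ ν) : ℝ :=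
  Real.sqrt (Real.sqrt ((1 + (∑ i, p.1 i ^ 2) / 4) ^ 2 + ∑ i, p.2.1 i ^ 2))

section
variable {μ ν : ℕ}

/-! ### The homogeneous size -/

lemma Nrm_sq (p : Pt μ ν) :
    Nrm p ^ 2 = Real.sqrt ((1 + (∑ i, p.1 i ^ 2) / 4) ^ 2 + ∑ i, p.2.1 i ^ 2) :=
  Real.sq_sqrt (Real.sqrt_nonneg _)

lemma Nrm_four (p : Pt μ ν) :
    Nrm p ^ 4 = (1 + (∑ i, p.1 i ^ 2) / 4) ^ 2 + ∑ i, p.2.1 i ^ 2 := by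
  have h : 0 ≤ ∑ i, p.2.1 i ^ 2 := Finset.sum_nonneg fun i _ => sq_nonneg _
  calc Nrm p ^ 4 = (Nrm p ^ 2) ^ 2 := by ring
    _ = _ := by rw [Nrm_sq, Real.sq_sqrt (by positivity)]

lemma le_Nrm_sq (p : Pt μ ν) : 1 + (∑ i, p.1 i ^ 2) / 4 ≤ Nrm p ^ 2 := by
  have h : 0 ≤ ∑ i, p.2.1 i ^ 2 := Finset.sum_nonneg fun i _ => sq_nonneg _
  rw [Nrm_sq]
  exact Real.le_sqrt_of_sq_le (by linarith)

lemma one_le_Nrm (p : Pt μ ν) : 1 ≤ Nrm p := by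
  have h : 0 ≤ ∑ i, p.1 i ^ 2 := Finset.sum_nonneg fun i _ => sq_nonneg _
  have h0 : 0 ≤ Nrm p := Real.sqrt_nonneg _
  have := le_Nrm_sq p
  nlinarith

lemma abs_x_le (p : Pt μ ν) (i : Fin μ) : |p.1 i| ≤ 2 * Nrm p := by
  have h : p.1 i ^ 2 ≤ ∑ i, p.1 i ^ 2 :=
    Finset.single_le_sum (f := fun i => p.1 i ^ 2) (fun i _ => sq_nonneg _) (Finset.mem_univ i)
  have h1 := one_le_Nrm p
  have := le_Nrm_sq p
  exact abs_le_of_sq_le_sq (by nlinarith) (by linarith)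

lemma abs_z_le (p : Pt μ ν) (i : Fin ν) : |p.2.1 i| ≤ Nrm p ^ 2 := by
  have h : p.2.1 i ^ 2 ≤ ∑ i, p.2.1 i ^ 2 :=
    Finset.single_le_sum (f := fun i => p.2.1 i ^ 2) (fun i _ => sq_nonneg _) (Finset.mem_univ i)
  have h4 := Nrm_four p
  refine abs_le_of_sq_le_sq ?_ (sq_nonneg _)
  have : 0 ≤ (1 + (∑ i, p.1 i ^ 2) / 4) ^ 2 := sq_nonneg _
  nlinarith

/-! ### Weighted polynomials: algebra, size and derivatives -/

lemma Cl.cast {k d k' d' : ℤ} {f g : Pt μ ν → ℝ} (hf : Cl k d f) (hk : k = k') (hd : d = d')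
    (hfg : ∀ p, f p = g p) : Cl k' d' g := by
  obtain rfl : f = g := funext hfg
  subst hk hd
  exact hf

lemma Cl.smul {k d : ℤ} {f : Pt μ ν → ℝ} (c : ℝ) (hf : Cl k d f) :
    Cl k d (fun p => c * f p) := by
  induction hf with
  | zero d => exact (Cl.zero d).cast rfl rfl (by simp)
  | pow d b hd => exact (Cl.pow d (c * b) hd).cast rfl rfl (fun p => by ring)
  | add _ _ h1 h2 => exact (h1.add h2).cast rfl rfl (fun p => by ring)
  | mulx i _ h => exact (h.mulx i).cast rfl rfl (fun p => by ring)
  | mulz i _ h => exact (h.mulz i).cast rfl rfl (fun p => by ring)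

/-- Multiplication by `√a`. The functions agree on `a > 0` only: for `a ≤ 0` the identity
`√a * (√a) ^ k = (√a) ^ (k + 1)` fails at `k = -1`. -/
lemma Cl.mul_sqrt {k d : ℤ} {f : Pt μ ν → ℝ} (hf : Cl k d f) :
    ∃ g : Pt μ ν → ℝ, Cl (k + 1) d g ∧ ∀ p : Pt μ ν, 0 < p.2.2 → Real.sqrt p.2.2 * f p = g p := by
  induction hf with
  | zero d => exact ⟨_, Cl.zero _, by simp⟩
  | pow d b hd =>
    refine ⟨_, Cl.pow d b hd, fun p hp => ?_⟩
    rw [zpow_add_one₀ (Real.sqrt_pos.2 hp).ne']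
    ring
  | add _ _ h1 h2 =>
    obtain ⟨g1, c1, e1⟩ := h1
    obtain ⟨g2, c2, e2⟩ := h2
    exact ⟨_, c1.add c2, fun p hp => by rw [← e1 p hp, ← e2 p hp]; ring⟩
  | mulx i _ h =>
    obtain ⟨g, c, e⟩ := h
    exact ⟨_, c.mulx i, fun p hp => by rw [← e p hp]; ring⟩
  | mulz i _ h =>
    obtain ⟨g, c, e⟩ := h
    exact ⟨_, c.mulz i, fun p hp => by rw [← e p hp]; ring⟩

lemma Cl.eq_zero {k d : ℤ} {f : Pt μ ν → ℝ} (hf : Cl k d f) (hd : d < 0) (p : Pt μ ν) :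
    f p = 0 := by
  induction hf with
  | zero d => rfl
  | pow d b h => omega
  | add _ _ h1 h2 => simp [h1 hd, h2 hd]
  | mulx i _ h => simp [h (by omega)]
  | mulz i _ h => simp [h (by omega)]

lemma Cl.bound {k d : ℤ} {f : Pt μ ν → ℝ} (hf : Cl k d f) :
    ∃ C : ℝ, 0 ≤ C ∧ ∀ p : Pt μ ν, |f p| ≤ C * (Real.sqrt p.2.2 ^ k * Nrm p ^ d) := by
  have hN : ∀ p : Pt μ ν, 0 < Nrm p := fun p => zero_lt_one.trans_le (one_le_Nrm p)
  induction hf with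
  | zero d => exact ⟨0, le_rfl, by simp⟩
  | pow d b hd =>
    refine ⟨|b|, abs_nonneg _, fun p => ?_⟩
    have h1 : 0 ≤ Real.sqrt p.2.2 ^ k := zpow_nonneg (Real.sqrt_nonneg _) _
    rw [abs_mul, abs_of_nonneg h1]
    exact mul_le_mul_of_nonneg_left
      (le_mul_of_one_le_right h1 (one_le_zpow₀ (one_le_Nrm p) hd)) (abs_nonneg _)
  | add _ _ h1 h2 =>
    obtain ⟨C1, c1, e1⟩ := h1
    obtain ⟨C2, c2, e2⟩ := h2
    refine ⟨C1 + C2, by positivity, fun p => (abs_add_le _ _).trans ?_⟩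
    rw [add_mul]
    exact add_le_add (e1 p) (e2 p)
  | @mulx d f i _ h =>
    obtain ⟨C, c, e⟩ := h
    refine ⟨2 * C, by positivity, fun p => ?_⟩
    rw [abs_mul, zpow_add₀ (hN p).ne', zpow_one]
    calc _ ≤ (2 * Nrm p) * (C * (Real.sqrt p.2.2 ^ k * Nrm p ^ d)) :=
          mul_le_mul (abs_x_le p i) (e p) (abs_nonneg _) (by linarith [hN p])
      _ = _ := by ring
  | @mulz d f i _ h =>
    obtain ⟨C, c, e⟩ := h
    refine ⟨C, c, fun p => ?_⟩
    rw [abs_mul, zpow_add₀ (hN p).ne']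
    calc _ ≤ (Nrm p ^ 2) * (C * (Real.sqrt p.2.2 ^ k * Nrm p ^ d)) :=
          mul_le_mul (abs_z_le p i) (e p) (abs_nonneg _) (sq_nonneg _)
      _ = C * (Real.sqrt p.2.2 ^ k * (Nrm p ^ d * Nrm p ^ 2)) := by ring
      _ = _ := by norm_cast

lemma Cl.deriv_a {k d : ℤ} {f : Pt μ ν → ℝ} (hf : Cl k d f) (p : Pt μ ν) (hp : 0 < p.2.2) :
    HasDerivAt (fun t => f (p.1, p.2.1, t)) ((k / 2 * f p) / p.2.2) p.2.2 := by
  induction hf with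
  | zero d => simpa using hasDerivAt_const p.2.2 (0 : ℝ)
  | pow d b hd =>
    have hs : 0 < Real.sqrt p.2.2 := Real.sqrt_pos.2 hp
    have h1 := ((hasDerivAt_zpow k (Real.sqrt p.2.2) (Or.inl hs.ne')).comp p.2.2
      (Real.hasDerivAt_sqrt hp.ne')).const_mul b
    refine h1.congr_deriv ?_
    have h2 : Real.sqrt p.2.2 ^ 2 = p.2.2 := Real.sq_sqrt hp.le
    rw [zpow_sub_one₀ hs.ne']
    field_simp
    rw [h2]
  | add _ _ h1 h2 => exact (h1.add h2).congr_deriv (by ring)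
  | mulx i _ h => exact (h.const_mul (p.1 i)).congr_deriv (by ring)
  | mulz i _ h => exact (h.const_mul (p.2.1 i)).congr_deriv (by ring)

lemma hasDerivAt_update_apply {n : ℕ} (x : Fin n → ℝ) (i j : Fin n) (t : ℝ) :
    HasDerivAt (fun t => Function.update x i t j) (if j = i then 1 else 0) t := by
  by_cases h : j = i
  · subst h
    simpa using hasDerivAt_id' t
  · simpa [h] using hasDerivAt_const t (x j)

lemma Cl.deriv_x {k d : ℤ} {f : Pt μ ν → ℝ} (hf : Cl k d f) (i : Fin μ) :
    ∃ g : Pt μ ν → ℝ, Cl k (d - 1) g ∧ ∀ p : Pt μ ν,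
      HasDerivAt (fun t => f (Function.update p.1 i t, p.2.1, p.2.2)) (g p) (p.1 i) := by
  induction hf with
  | zero d => exact ⟨_, Cl.zero _, fun p => hasDerivAt_const _ _⟩
  | pow d b hd =>
    exact ⟨_, Cl.zero _, fun p => hasDerivAt_const _ (b * Real.sqrt p.2.2 ^ k)⟩
  | add _ _ h1 h2 =>
    obtain ⟨g1, c1, e1⟩ := h1
    obtain ⟨g2, c2, e2⟩ := h2
    exact ⟨_, c1.add c2, fun p => (e1 p).add (e2 p)⟩
  | @mulx d f j hf h =>
    obtain ⟨g, c, e⟩ := h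
    refine ⟨fun p => (if j = i then 1 else 0) * f p + p.1 j * g p,
      ((hf.smul _).cast rfl (by ring) fun _ => rfl).add
        ((c.mulx j).cast rfl (by ring) fun _ => rfl), fun p => ?_⟩
    refine ((hasDerivAt_update_apply p.1 i j _).mul (e p)).congr_deriv ?_
    simp only [Function.update_eq_self]
  | mulz j _ h =>
    obtain ⟨g, c, e⟩ := h
    exact ⟨_, (c.mulz j).cast rfl (by ring) fun _ => rfl, fun p => (e p).const_mul _⟩

lemma Cl.deriv_z {k d : ℤ} {f : Pt μ ν → ℝ} (hf : Cl k d f) (i : Fin ν) :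
    ∃ g : Pt μ ν → ℝ, Cl k (d - 2) g ∧ ∀ p : Pt μ ν,
      HasDerivAt (fun t => f (p.1, Function.update p.2.1 i t, p.2.2)) (g p) (p.2.1 i) := by
  induction hf with
  | zero d => exact ⟨_, Cl.zero _, fun p => hasDerivAt_const _ _⟩
  | pow d b hd =>
    exact ⟨_, Cl.zero _, fun p => hasDerivAt_const _ (b * Real.sqrt p.2.2 ^ k)⟩
  | add _ _ h1 h2 =>
    obtain ⟨g1, c1, e1⟩ := h1
    obtain ⟨g2, c2, e2⟩ := h2
    exact ⟨_, c1.add c2, fun p => (e1 p).add (e2 p)⟩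
  | @mulz d f j hf h =>
    obtain ⟨g, c, e⟩ := h
    refine ⟨fun p => (if j = i then 1 else 0) * f p + p.2.1 j * g p,
      ((hf.smul _).cast rfl (by ring) fun _ => rfl).add
        ((c.mulz j).cast rfl (by ring) fun _ => rfl), fun p => ?_⟩
    refine ((hasDerivAt_update_apply p.2.1 i j _).mul (e p)).congr_deriv ?_
    simp only [Function.update_eq_self]
  | mulx j _ h =>
    obtain ⟨g, c, e⟩ := h
    exact ⟨_, (c.mulx j).cast rfl (by ring) fun _ => rfl, fun p => (e p).const_mul _⟩

/-! ### The invariant class -/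

/-- `Full f`: on `a > 0`, the function `f` is a finite sum of functions `(√a) ^ k P(x, z)` with
`k ≥ -2` and `P` a polynomial of weighted degree at most `2 - k`. Nothing is required of `f` where
`a ≤ 0`. -/
inductive Full {μ ν : ℕ} : (Pt μ ν → ℝ) → Prop
  | of {k d : ℤ} {f g : Pt μ ν → ℝ} (hk : -2 ≤ k) (hkd : k + d ≤ 2) (hf : Cl k d f)
      (hfg : ∀ p : Pt μ ν, 0 < p.2.2 → g p = f p) : Full g
  | add {f g h : Pt μ ν → ℝ} (hf : Full f) (hg : Full g)
      (hh : ∀ p : Pt μ ν, 0 < p.2.2 → h p = f p + g p) : Full h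

lemma Full.congr {f g : Pt μ ν → ℝ} (hf : Full f)
    (h : ∀ p : Pt μ ν, 0 < p.2.2 → g p = f p) : Full g := by
  cases hf with
  | of hk hkd hf hfg => exact Full.of hk hkd hf fun p hp => (h p hp).trans (hfg p hp)
  | add hf hg hh => exact Full.add hf hg fun p hp => (h p hp).trans (hh p hp)

lemma Full.smul {f : Pt μ ν → ℝ} (c : ℝ) (hf : Full f) : Full (fun p => c * f p) := by
  induction hf with
  | of hk hkd hf hfg => exact Full.of hk hkd (hf.smul c) fun p hp => by rw [hfg p hp]
  | add _ _ hh h1 h2 => exact Full.add h1 h2 fun p hp => by rw [hh p hp]; ring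

lemma Full.zero : Full (fun _ : Pt μ ν => (0 : ℝ)) :=
  Full.of (k := 0) (d := 0) (by norm_num) (by norm_num) (Cl.zero _) fun _ _ => rfl

lemma Full.sum {ι : Type*} (s : Finset ι) {f : ι → Pt μ ν → ℝ} (hf : ∀ i ∈ s, Full (f i)) :
    Full (fun p => ∑ i ∈ s, f i p) := by
  classical
  induction s using Finset.induction_on with
  | empty => simpa using Full.zero
  | insert i s hi ih =>
    exact Full.add (hf i (Finset.mem_insert_self _ _))
      (ih fun j hj => hf j (Finset.mem_insert_of_mem hj)) fun p _ => Finset.sum_insert hi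

lemma Full.deriv_a {f : Pt μ ν → ℝ} (hf : Full f) :
    ∃ g : Pt μ ν → ℝ, Full (fun p => p.2.2 * g p) ∧ ∀ p : Pt μ ν, 0 < p.2.2 →
      HasDerivAt (fun t => f (p.1, p.2.1, t)) (g p) p.2.2 := by
  induction hf with
  | @of k d f g hk hkd hf hfg =>
    refine ⟨fun p => (k / 2 * f p) / p.2.2,
      Full.of hk hkd (hf.smul (k / 2)) fun p hp => by field_simp, fun p hp => ?_⟩
    refine (hf.deriv_a p hp).congr_of_eventuallyEq ?_
    filter_upwards [lt_mem_nhds hp] with t ht using hfg _ ht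
  | add _ _ hh h1 h2 =>
    obtain ⟨g1, c1, e1⟩ := h1
    obtain ⟨g2, c2, e2⟩ := h2
    refine ⟨fun p => g1 p + g2 p, Full.add c1 c2 fun p _ => by ring, fun p hp => ?_⟩
    refine ((e1 p hp).add (e2 p hp)).congr_of_eventuallyEq ?_
    filter_upwards [lt_mem_nhds hp] with t ht using hh _ ht

lemma Full.deriv_x {f : Pt μ ν → ℝ} (hf : Full f) (i : Fin μ) :
    ∃ g : Pt μ ν → ℝ, Full (fun p => Real.sqrt p.2.2 * g p) ∧ ∀ p : Pt μ ν, 0 < p.2.2 →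
      HasDerivAt (fun t => f (Function.update p.1 i t, p.2.1, p.2.2)) (g p) (p.1 i) := by
  induction hf with
  | @of k d f g hk hkd hf hfg =>
    obtain ⟨g', c, e⟩ := hf.deriv_x i
    obtain ⟨g2, c2, e2⟩ := c.mul_sqrt
    refine ⟨g', Full.of (by omega) (by omega) c2 e2, fun p hp => ?_⟩
    exact (e p).congr_of_eventuallyEq (.of_forall fun t => hfg _ hp)
  | add _ _ hh h1 h2 =>
    obtain ⟨g1, c1, e1⟩ := h1
    obtain ⟨g2, c2, e2⟩ := h2
    refine ⟨fun p => g1 p + g2 p, Full.add c1 c2 fun p _ => by ring, fun p hp => ?_⟩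
    exact ((e1 p hp).add (e2 p hp)).congr_of_eventuallyEq (.of_forall fun t => hh _ hp)

lemma Full.deriv_z {f : Pt μ ν → ℝ} (hf : Full f) (i : Fin ν) :
    ∃ g : Pt μ ν → ℝ, Full (fun p => p.2.2 * g p) ∧
      (∀ j, Full (fun p => Real.sqrt p.2.2 * (p.1 j * g p))) ∧
      ∀ p : Pt μ ν, 0 < p.2.2 →
      HasDerivAt (fun t => f (p.1, Function.update p.2.1 i t, p.2.2)) (g p) (p.2.1 i) := by
  induction hf with
  | @of k d f g hk hkd hf hfg =>
    obtain ⟨g', c, e⟩ := hf.deriv_z i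
    obtain ⟨g2, c2, e2⟩ := c.mul_sqrt
    obtain ⟨g3, c3, e3⟩ := c2.mul_sqrt
    refine ⟨g', Full.of (by omega) (by omega) c3 fun p hp => ?_, fun j => ?_, fun p hp => ?_⟩
    · rw [← e3 p hp, ← e2 p hp, ← mul_assoc, Real.mul_self_sqrt hp.le]
    · exact Full.of (by omega) (by omega) (c2.mulx j) fun p hp => by rw [← e2 p hp]; ring
    · exact (e p).congr_of_eventuallyEq (.of_forall fun t => hfg _ hp)
  | add _ _ hh h1 h2 =>
    obtain ⟨g1, c1, d1, e1⟩ := h1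
    obtain ⟨g2, c2, d2, e2⟩ := h2
    refine ⟨fun p => g1 p + g2 p, Full.add c1 c2 fun p _ => by ring,
      fun j => Full.add (d1 j) (d2 j) fun p _ => by ring, fun p hp => ?_⟩
    exact ((e1 p hp).add (e2 p hp)).congr_of_eventuallyEq (.of_forall fun t => hh _ hp)

/-- The class is stable under all the vector fields `X_j`, because the coefficients of `X_ℓ` along
`∂_{z_k}` are `√a` times a linear form in `x`. -/
lemma Full.Xf (Jm : Fin ν → Matrix (Fin μ) (Fin μ) ℝ) (j : Fin (μ + ν + 1))
    {f : Pt μ ν → ℝ} (hf : Full f) : Full (DR.Xf μ ν Jm j f) := by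
  unfold DR.Xf
  by_cases h0 : (j : ℕ) = 0
  · simp only [h0, dite_true]
    obtain ⟨g, c, e⟩ := hf.deriv_a
    exact c.congr fun p hp => by rw [(e p hp).deriv]
  by_cases hm : (j : ℕ) ≤ μ
  · simp only [h0, hm, dite_true, dite_false]
    have hlt : (j : ℕ) - 1 < μ := by omega
    obtain ⟨g, c, e⟩ := hf.deriv_x ⟨(j : ℕ) - 1, hlt⟩
    choose G c1 c2 e2 using fun k => hf.deriv_z k
    refine Full.add c (Full.smul (1 / 2) (Full.sum Finset.univ fun k _ =>
      Full.sum Finset.univ fun l _ => (c2 k l).smul (Jm k ⟨(j : ℕ) - 1, hlt⟩ l))) fun p hp => ?_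
    rw [(e p hp).deriv]
    simp only [(e2 _ p hp).deriv, Matrix.mulVec, dotProduct, Finset.sum_mul]
    rw [mul_add, mul_left_comm, Finset.mul_sum]
    congr 2
    refine Finset.sum_congr rfl fun k _ => ?_
    rw [Finset.mul_sum]
    exact Finset.sum_congr rfl fun l _ => by ring
  · simp only [h0, hm, dite_false]
    have hlt : (j : ℕ) - μ - 1 < ν := by have := j.isLt; omega
    obtain ⟨g, c, -, e⟩ := hf.deriv_z ⟨(j : ℕ) - μ - 1, hlt⟩
    exact c.congr fun p hp => by rw [(e p hp).deriv]

lemma Full.XL (Jm : Fin ν → Matrix (Fin μ) (Fin μ) ℝ) (J : List (Fin (μ + ν + 1)))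
    {f : Pt μ ν → ℝ} (hf : Full f) : Full (DR.XL μ ν Jm J f) := by
  induction J with
  | nil => exact hf
  | cons j L ih => exact ih.Xf Jm j

/-! ### Comparison with `cosh²(r/2)` -/

lemma coshExpr_eq (p : Pt μ ν) (hp : 0 < p.2.2) :
    coshExpr μ ν p = Real.sqrt p.2.2 ^ 2 / 4 + (1 + (∑ i, p.1 i ^ 2) / 4) / 2 +
      Nrm p ^ 4 / (4 * Real.sqrt p.2.2 ^ 2) := by
  have hs : 0 < Real.sqrt p.2.2 := Real.sqrt_pos.2 hp
  rw [Nrm_four, coshExpr, show (p.2.2)⁻¹ = (Real.sqrt p.2.2 ^ 2)⁻¹ by rw [Real.sq_sqrt hp.le]]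
  field_simp
  ring

lemma zpow_mul_le {s N : ℝ} (hs : 0 < s) (hN : 1 ≤ N) {k d : ℤ} (hk : -2 ≤ k) (hd : 0 ≤ d)
    (hkd : k + d ≤ 2) : s ^ k * N ^ d ≤ s ^ 2 + N ^ 4 / s ^ 2 := by
  have hN0 : 0 < N := by linarith
  have h1 : s ^ k * N ^ d ≤ s ^ k * N ^ (2 - k) :=
    mul_le_mul_of_nonneg_left (zpow_le_zpow_right₀ hN (by omega)) (zpow_nonneg hs.le _)
  refine h1.trans ?_
  obtain ⟨j, hj⟩ : ∃ j : ℕ, 2 - k = j := ⟨(2 - k).toNat, by omega⟩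
  obtain rfl : k = 2 - j := by omega
  -- With `t = N / s` the two sides are `s² t ^ j` and `s² (1 + t⁴)`, where `j ≤ 4`.
  have e1 : s ^ (2 - (j : ℤ)) * N ^ (2 - (2 - (j : ℤ))) = s ^ 2 * (N / s) ^ j := by
    rw [hj, zpow_sub₀ hs.ne', div_pow, zpow_natCast, zpow_natCast, zpow_ofNat]
    ring
  have e2 : s ^ 2 + N ^ 4 / s ^ 2 = s ^ 2 * (1 + (N / s) ^ 4) := by field_simp
  rw [e1, e2]
  refine mul_le_mul_of_nonneg_left ?_ (by positivity)
  have ht : 0 ≤ N / s := by positivity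
  rcases le_total (N / s) 1 with h | h
  · linarith [pow_le_one₀ (n := j) ht h, pow_nonneg ht 4]
  · linarith [pow_le_pow_right₀ h (show j ≤ 4 by omega)]

lemma Full.bound {f : Pt μ ν → ℝ} (hf : Full f) :
    ∃ C : ℝ, 0 ≤ C ∧ ∀ p : Pt μ ν, 0 < p.2.2 → |f p| ≤ C * coshExpr μ ν p := by
  induction hf with
  | @of k d f g hk hkd hf hfg =>
    obtain ⟨C, c, e⟩ := hf.bound
    refine ⟨C * 4, by positivity, fun p hp => ?_⟩
    have hs : 0 < Real.sqrt p.2.2 := Real.sqrt_pos.2 hp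
    have hx : 0 ≤ ∑ i, p.1 i ^ 2 := Finset.sum_nonneg fun i _ => sq_nonneg _
    have hE : Real.sqrt p.2.2 ^ 2 + Nrm p ^ 4 / Real.sqrt p.2.2 ^ 2 ≤ 4 * coshExpr μ ν p := by
      rw [coshExpr_eq p hp]
      have : Nrm p ^ 4 / (4 * Real.sqrt p.2.2 ^ 2) = Nrm p ^ 4 / Real.sqrt p.2.2 ^ 2 / 4 := by
        field_simp
      rw [this]
      linarith
    rw [hfg p hp, mul_assoc]
    -- For `d < 0` the exponent `k` may exceed `2`, but then the function vanishes.
    rcases lt_or_ge d 0 with hd | hd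
    · rw [hf.eq_zero hd p, abs_zero]
      have : 0 ≤ Real.sqrt p.2.2 ^ 2 + Nrm p ^ 4 / Real.sqrt p.2.2 ^ 2 := by positivity
      exact mul_nonneg c (this.trans hE)
    · exact (e p).trans (mul_le_mul_of_nonneg_left
        ((zpow_mul_le hs (one_le_Nrm p) hk hd hkd).trans hE) c)
  | add _ _ hh h1 h2 =>
    obtain ⟨C1, c1, e1⟩ := h1
    obtain ⟨C2, c2, e2⟩ := h2
    refine ⟨C1 + C2, by positivity, fun p hp => ?_⟩
    rw [hh p hp, add_mul]
    exact (abs_add_le _ _).trans (add_le_add (e1 p hp) (e2 p hp))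

lemma Full_coshExpr : Full (fun p : Pt μ ν => 2 * coshExpr μ ν p - 1) := by
  -- `2E - 1 = s²/2 + |x|²/4 + (1 + |x|²/2 + |x|⁴/16 + |z|²) / (2s²)`, one summand at a time.
  have h1 : Full (fun p : Pt μ ν => 1 / 2 * Real.sqrt p.2.2 ^ (2 : ℤ)) :=
    Full.of (by norm_num) (by norm_num) (Cl.pow (k := 2) 0 (1 / 2) le_rfl) fun _ _ => rfl
  have h2 : Full (fun p : Pt μ ν => ∑ i, p.1 i * (p.1 i * (1 / 4 * Real.sqrt p.2.2 ^ (0 : ℤ)))) :=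
    Full.sum _ fun i _ => Full.of (by norm_num) (by norm_num)
      (((Cl.pow (k := 0) 0 (1 / 4) le_rfl).mulx i).mulx i) fun _ _ => rfl
  have h3 : Full (fun p : Pt μ ν => 1 / 2 * Real.sqrt p.2.2 ^ (-2 : ℤ)) :=
    Full.of (by norm_num) (by norm_num) (Cl.pow (k := -2) 0 (1 / 2) le_rfl) fun _ _ => rfl
  have h4 : Full (fun p : Pt μ ν =>
      ∑ i, p.1 i * (p.1 i * (1 / 4 * Real.sqrt p.2.2 ^ (-2 : ℤ)))) :=
    Full.sum _ fun i _ => Full.of (by norm_num) (by norm_num)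
      (((Cl.pow (k := -2) 0 (1 / 4) le_rfl).mulx i).mulx i) fun _ _ => rfl
  have h5 : Full (fun p : Pt μ ν => ∑ i, ∑ j,
      p.1 i * (p.1 i * (p.1 j * (p.1 j * (1 / 32 * Real.sqrt p.2.2 ^ (-2 : ℤ)))))) :=
    Full.sum _ fun i _ => Full.sum _ fun j _ => Full.of (by norm_num) (by norm_num)
      (((((Cl.pow (k := -2) 0 (1 / 32) le_rfl).mulx j).mulx j).mulx i).mulx i) fun _ _ => rfl
  have h6 : Full (fun p : Pt μ ν =>
      ∑ i, p.2.1 i * (p.2.1 i * (1 / 2 * Real.sqrt p.2.2 ^ (-2 : ℤ)))) :=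
    Full.sum _ fun i _ => Full.of (by norm_num) (by norm_num)
      (((Cl.pow (k := -2) 0 (1 / 2) le_rfl).mulz i).mulz i) fun _ _ => rfl
  have a1 := Full.add h1 h2 fun _ _ => rfl
  have a2 := Full.add a1 h3 fun _ _ => rfl
  have a3 := Full.add a2 h4 fun _ _ => rfl
  have a4 := Full.add a3 h5 fun _ _ => rfl
  refine Full.add a4 h6 fun p hp => ?_
  have hs : 0 < Real.sqrt p.2.2 := Real.sqrt_pos.2 hp
  have q : ∀ (n : ℕ) (y : Fin n → ℝ) (c : ℝ), ∑ i, y i * (y i * c) = (∑ i, y i ^ 2) * c := by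
    intro n y c
    rw [Finset.sum_mul]
    exact Finset.sum_congr rfl fun i _ => by ring
  simp only [← Finset.mul_sum, q]
  rw [coshExpr_eq p hp, Nrm_four, zpow_neg, zpow_zero, zpow_ofNat]
  field_simp
  ring

end

theorem cosh_derivative_bound (μ ν : ℕ) (hμ : Even μ) (hν : 1 ≤ ν)
    (Jm : Fin ν → Matrix (Fin μ) (Fin μ) ℝ)
    (hskew : ∀ k, (Jm k).transpose = -(Jm k))
    (hH : ∀ k l, Jm k * Jm l + Jm l * Jm k =
      if k = l then (-2 : ℝ) • (1 : Matrix (Fin μ) (Fin μ) ℝ) else 0)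
    (r : Pt μ ν → ℝ)
    (hr0 : ∀ p : Pt μ ν, 0 < p.2.2 → 0 ≤ r p)
    (hreq : ∀ p : Pt μ ν, 0 < p.2.2 → Real.cosh (r p / 2) ^ 2 = coshExpr μ ν p)
    (m : ℕ) (hm : 1 ≤ m) :
    ∃ C : ℝ, 0 < C ∧ ∀ J : List (Fin (μ + ν + 1)), J.length = m →
      ∀ p : Pt μ ν, 0 < p.2.2 →
        |XL μ ν Jm J (fun q => Real.cosh (r q)) p| ≤ C * Real.cosh (r p) := by
  have hcosh : ∀ p : Pt μ ν, 0 < p.2.2 → Real.cosh (r p) = 2 * coshExpr μ ν p - 1 := by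
    intro p hp
    have h := Real.cosh_sq' (r p / 2)
    have h2 := Real.cosh_two_mul (r p / 2)
    rw [mul_div_cancel₀ _ (two_ne_zero' ℝ)] at h2
    rw [← hreq p hp]
    linarith
  have hle : ∀ p : Pt μ ν, 0 < p.2.2 → coshExpr μ ν p ≤ Real.cosh (r p) := by
    intro p hp
    have h1 : 1 ≤ coshExpr μ ν p := by
      rw [← hreq p hp]
      exact one_le_pow₀ (Real.one_le_cosh _)
    rw [hcosh p hp]
    linarith
  have hF : Full (fun p : Pt μ ν => Real.cosh (r p)) := Full_coshExpr.congr hcosh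
  choose C c e using fun J => (hF.XL Jm J).bound
  obtain ⟨M, hM⟩ := ((List.finite_length_eq (Fin (μ + ν + 1)) m).image C).bddAbove
  refine ⟨max M 1, by positivity, fun J hJ p hp => (e J p hp).trans ?_⟩
  have hCM : C J ≤ max M 1 := (hM (Set.mem_image_of_mem C hJ)).trans (le_max_left _ _)
  exact (mul_le_mul_of_nonneg_left (hle p hp) (c J)).trans
    (mul_le_mul_of_nonneg_right hCM (Real.cosh_pos _).le)

end DR
end
end

section
/- For every k ≥ 1 there exist y ∈ (−1,1) and a constant b_k ≠ 0 such that, along the curve η_y(a) = (0, √((1−y)/(1+y)) · a · u_1, a) (where u_1 is the first standard basis vector of ℝ^ν), one has r(η_y(a)) → +∞ and (X_0^k r)(η_y(a)) → b_k as a → ∞. In particular, the estimate |X_J r| ≤ C ((1+r)/r)^{k−1} admits no decay improvement as r → ∞. -/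
/-!
Write `Z = |z|²`. On the line `x = 0` the defining relation of the distance becomes
`cosh r = w`, with `w = (a + (1 + Z)/a)/2`. Put `v = (a - (1 + Z)/a)/2` and `S = √(w² - 1) = sinh r`.
Since `a ∂_a w = v`, `a ∂_a v = w` and `w² - v² = 1 + Z`, the functions `f = v/S` and `C = w/S` satisfy
`X_0 r = f`, `X_0 f = C (1 - f²)` and `X_0 C = f (1 - C²)`. Hence `X_0^k r` is the value at `(f, C)` of
the bivariate polynomial `D^{k-1} T₀`, for the derivation `D` with `D T₀ = T₁ (1 - T₀²)` and
`D T₁ = T₀ (1 - T₁²)` (`iterate_X0op`).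

Along `η_y` one has `w → ∞`, `f → y` and `C → 1`. On `T₁ = 1` the derivation `D` restricts to
`(1 - T²) d/dT` (`spec_D`), so `X_0^k r` tends to `P_k(y)`, where `P_1 = T` and
`P_{k+1} = (1 - T²) P_k'`. The polynomial `P_k` has degree `k`, so it is nonzero and some
`y ∈ (-1, 1)` is not one of its roots.
-/

open Real MeasureTheory Filter Topology

noncomputable section

namespace DR

/-! ### The derivation governing iterated `X_0`-derivatives -/

/-- The derivation `D` of `ℝ[T₀, T₁]` with `D T₀ = T₁ (1 - T₀²)` and `D T₁ = T₀ (1 - T₁²)`. -/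
def D : Derivation ℝ (MvPolynomial (Fin 2) ℝ) (MvPolynomial (Fin 2) ℝ) :=
  MvPolynomial.mkDerivation ℝ
    ![MvPolynomial.X 1 * (1 - MvPolynomial.X 0 ^ 2), MvPolynomial.X 0 * (1 - MvPolynomial.X 1 ^ 2)]

/-- Specialization `T₀ ↦ T`, `T₁ ↦ 1`. -/
def spec : MvPolynomial (Fin 2) ℝ →ₐ[ℝ] Polynomial ℝ :=
  MvPolynomial.aeval ![Polynomial.X, 1]

lemma D_X0 : D (MvPolynomial.X 0) = MvPolynomial.X 1 * (1 - MvPolynomial.X 0 ^ 2) := by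
  simp [D, MvPolynomial.mkDerivation_X]

lemma D_X1 : D (MvPolynomial.X 1) = MvPolynomial.X 0 * (1 - MvPolynomial.X 1 ^ 2) := by
  simp [D, MvPolynomial.mkDerivation_X]

/-- The line `T₁ = 1` is invariant under `D`, which acts there as `(1 - T²) d/dT`. -/
lemma spec_D (Q : MvPolynomial (Fin 2) ℝ) :
    spec (D Q) = (1 - Polynomial.X ^ 2) * Polynomial.derivative (spec Q) := by
  induction Q using MvPolynomial.induction_on with
  | C c => simp [spec, D]
  | add p q hp hq => simp only [map_add, hp, hq, mul_add]
  | mul_X p i hp =>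
    have h0 : spec (MvPolynomial.X 0) = Polynomial.X := by simp [spec]
    have h1 : spec (MvPolynomial.X 1) = 1 := by simp [spec]
    rw [Derivation.leibniz]
    fin_cases i
    · simp only [Fin.zero_eta, D_X0, smul_eq_mul, map_add, map_mul, map_sub, map_pow, map_one,
        hp, h0, h1, Polynomial.derivative_mul, Polynomial.derivative_X]
      ring
    · simp only [Fin.mk_one, D_X1, smul_eq_mul, map_add, map_mul, map_sub, map_pow, map_one,
        hp, h0, h1]
      ring

lemma natDegree_spec_iterate (k : ℕ) :
    (spec (D^[k] (MvPolynomial.X 0))).natDegree = k + 1 := by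
  induction k with
  | zero => simp [spec]
  | succ k ih =>
    rw [Function.iterate_succ_apply', spec_D]
    set P := spec (D^[k] (MvPolynomial.X 0))
    have h1 : ((1 : Polynomial ℝ) - Polynomial.X ^ 2).natDegree = 2 := by compute_degree!
    have h2 : (Polynomial.derivative P).natDegree = k := by
      rw [Polynomial.natDegree_derivative, ih]; rfl
    have h3 : Polynomial.derivative P ≠ 0 := by
      intro h
      have := Polynomial.derivative_eq_zero.1 h
      omega
    have h4 : ((1 : Polynomial ℝ) - Polynomial.X ^ 2) ≠ 0 := by
      intro h; rw [h] at h1; simp at h1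
    rw [Polynomial.natDegree_mul h4 h3, h1, h2]; ring

lemma exists_eval_ne_zero (P : Polynomial ℝ) (hP : P ≠ 0) :
    ∃ y ∈ Set.Ioo (-1 : ℝ) 1, P.eval y ≠ 0 := by
  by_contra! h
  exact hP (Polynomial.eq_zero_of_infinite_isRoot P
    ((Set.Ioo_infinite (by norm_num : (-1 : ℝ) < 1)).mono fun y hy => h y hy))

lemma eval_spec (Q : MvPolynomial (Fin 2) ℝ) (y : ℝ) :
    (spec Q).eval y = MvPolynomial.eval ![y, 1] Q := by
  induction Q using MvPolynomial.induction_on with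
  | C c => simp [spec]
  | add p q hp hq => simp [hp, hq]
  | mul_X p i hp =>
    rw [map_mul, Polynomial.eval_mul, hp, map_mul]
    fin_cases i <;> simp [spec]

/-! ### The distance on the line `x = 0` -/

/-- `w = (a + (1 + Z)/a)/2`, the value of `cosh r` at `x = 0`, `|z|² = Z`. -/
def wf (Z a : ℝ) : ℝ := (a + (1 + Z) / a) / 2

/-- `v = (a - (1 + Z)/a)/2`, equal to `a ∂_a w`. -/
def vf (Z a : ℝ) : ℝ := (a - (1 + Z) / a) / 2

/-- `S = √(w² - 1)`, the value of `sinh r`. -/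
def Sf (Z a : ℝ) : ℝ := Real.sqrt (wf Z a ^ 2 - 1)

lemma hasDerivAt_wf (Z : ℝ) {a : ℝ} (ha : 0 < a) : HasDerivAt (wf Z) (vf Z a / a) a := by
  have h := ((hasDerivAt_id a).add ((hasDerivAt_inv ha.ne').const_mul (1 + Z))).div_const 2
  refine (h.congr_deriv ?_).congr_of_eventuallyEq (Eventually.of_forall fun s => ?_)
  · simp only [vf]; field_simp; ring
  · simp [wf, div_eq_mul_inv]

lemma hasDerivAt_vf (Z : ℝ) {a : ℝ} (ha : 0 < a) : HasDerivAt (vf Z) (wf Z a / a) a := by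
  have h := ((hasDerivAt_id a).sub ((hasDerivAt_inv ha.ne').const_mul (1 + Z))).div_const 2
  refine (h.congr_deriv ?_).congr_of_eventuallyEq (Eventually.of_forall fun s => ?_)
  · simp only [wf]; field_simp; ring
  · simp [vf, div_eq_mul_inv]

lemma wf_pos {Z a : ℝ} (hZ : 0 < Z) (ha : 0 < a) : 0 < wf Z a := by
  unfold wf; positivity

lemma wf_sq {Z a : ℝ} (ha : 0 < a) : wf Z a ^ 2 = vf Z a ^ 2 + (1 + Z) := by
  unfold wf vf; field_simp; ring

lemma Sf_pos {Z a : ℝ} (hZ : 0 < Z) (ha : 0 < a) : 0 < Sf Z a := by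
  refine Real.sqrt_pos.2 ?_
  rw [wf_sq ha]; nlinarith [sq_nonneg (vf Z a)]

lemma Sf_sq {Z a : ℝ} (hZ : 0 < Z) (ha : 0 < a) : Sf Z a ^ 2 = wf Z a ^ 2 - 1 := by
  refine Real.sq_sqrt ?_
  rw [wf_sq ha]; nlinarith [sq_nonneg (vf Z a)]

lemma hasDerivAt_Sf {Z a : ℝ} (hZ : 0 < Z) (ha : 0 < a) :
    HasDerivAt (Sf Z) (wf Z a * vf Z a / (a * Sf Z a)) a := by
  have hS := Sf_pos hZ ha
  have h0 : wf Z a ^ 2 - 1 ≠ 0 := by rw [← Sf_sq hZ ha]; positivity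
  have h := (((hasDerivAt_wf Z ha).pow 2).sub_const 1).sqrt h0
  refine h.congr_deriv ?_
  change _ / (2 * Sf Z a) = _
  push_cast
  field_simp

/-- The chain rule for polynomials in `f = v/S` and `C = w/S`, on which `a ∂_a` acts through `D`. -/
lemma hasDerivAt_eval {Z a : ℝ} (hZ : 0 < Z) (ha : 0 < a) (Q : MvPolynomial (Fin 2) ℝ) :
    HasDerivAt (fun s => MvPolynomial.eval ![vf Z s / Sf Z s, wf Z s / Sf Z s] Q)
      (MvPolynomial.eval ![vf Z a / Sf Z a, wf Z a / Sf Z a] (D Q) / a) a := by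
  have hS := Sf_pos hZ ha
  have hSq := Sf_sq hZ ha
  induction Q using MvPolynomial.induction_on with
  | C c => simpa [D] using hasDerivAt_const a c
  | add p q hp hq =>
    simp only [map_add, add_div]
    exact hp.add hq
  | mul_X p i hp =>
    rw [Derivation.leibniz]
    fin_cases i
    · have h := (hasDerivAt_vf Z ha).div (hasDerivAt_Sf hZ ha) hS.ne'
      refine ((hp.mul h).congr_deriv ?_).congr_of_eventuallyEq
        (Eventually.of_forall fun s => by simp)
      simp [D_X0]
      field_simp
      ring
    · have h := (hasDerivAt_wf Z ha).div (hasDerivAt_Sf hZ ha) hS.ne'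
      refine ((hp.mul h).congr_deriv ?_).congr_of_eventuallyEq
        (Eventually.of_forall fun s => by simp)
      simp [D_X1]
      field_simp
      ring

lemma hasDerivAt_log {Z a : ℝ} (hZ : 0 < Z) (ha : 0 < a) :
    HasDerivAt (fun s => Real.log (wf Z s + Sf Z s)) (vf Z a / Sf Z a / a) a := by
  have hS := Sf_pos hZ ha
  have hw := wf_pos hZ ha
  have h := ((hasDerivAt_wf Z ha).add (hasDerivAt_Sf hZ ha)).log (by
    simp only [Pi.add_apply]; positivity)
  refine h.congr_deriv ?_
  simp only [Pi.add_apply]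
  field_simp
  ring

lemma r_eq_log {μ ν : ℕ} (r : Pt μ ν → ℝ)
    (hr0 : ∀ p : Pt μ ν, 0 < p.2.2 → 0 ≤ r p)
    (hreq : ∀ p : Pt μ ν, 0 < p.2.2 → Real.cosh (r p / 2) ^ 2 = coshExpr μ ν p)
    (z : Fin ν → ℝ) {a : ℝ} (ha : 0 < a) :
    r (0, z, a) = Real.log (wf (∑ i, z i ^ 2) a + Sf (∑ i, z i ^ 2) a) := by
  have h1 := hreq (0, z, a) ha
  have h0 := hr0 (0, z, a) ha
  have hs : Real.sqrt a ^ 2 = a := Real.sq_sqrt ha.le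
  have hsp : 0 < Real.sqrt a := Real.sqrt_pos.2 ha
  have h2 : Real.cosh (r (0, z, a)) = wf (∑ i, z i ^ 2) a := by
    have h3 := Real.cosh_sq (r (0, z, a) / 2)
    have h4 := Real.cosh_two_mul (r (0, z, a) / 2)
    rw [mul_div_cancel₀ _ (two_ne_zero)] at h4
    have h5 : Real.cosh (r (0, z, a)) = 2 * Real.cosh (r (0, z, a) / 2) ^ 2 - 1 := by
      rw [h4]; linarith
    rw [h5, h1]
    simp only [coshExpr, wf, Pi.zero_apply, ne_eq, OfNat.ofNat_ne_zero, not_false_eq_true, zero_pow,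
      Finset.sum_const_zero, mul_zero, zero_div, add_zero]
    have h6 : ((Real.sqrt a + (Real.sqrt a)⁻¹) / 2) ^ 2 = (a + 2 + a⁻¹) / 4 := by
      rw [div_pow, add_sq, hs, inv_pow, hs, mul_assoc, mul_inv_cancel₀ hsp.ne']; ring
    rw [h6]
    field_simp
    ring
  have h3 : Real.sinh (r (0, z, a)) = Sf (∑ i, z i ^ 2) a := by
    rw [Sf, ← h2, ← Real.sinh_sq, Real.sqrt_sq (Real.sinh_nonneg_iff.2 h0)]
  rw [← h2, ← h3, Real.cosh_add_sinh, Real.log_exp]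

/-- For `x = 0` and `z ≠ 0`, iterated `X_0`-derivatives of `r` are polynomials in `v/S` and `w/S`. -/
lemma iterate_X0op {μ ν : ℕ} (r : Pt μ ν → ℝ)
    (hr0 : ∀ p : Pt μ ν, 0 < p.2.2 → 0 ≤ r p)
    (hreq : ∀ p : Pt μ ν, 0 < p.2.2 → Real.cosh (r p / 2) ^ 2 = coshExpr μ ν p)
    (z : Fin ν → ℝ) (hZ : 0 < ∑ i, z i ^ 2) (k : ℕ) {a : ℝ} (ha : 0 < a) :
    (X0op μ ν)^[k + 1] r (0, z, a) =
      MvPolynomial.eval ![vf (∑ i, z i ^ 2) a / Sf (∑ i, z i ^ 2) a,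
        wf (∑ i, z i ^ 2) a / Sf (∑ i, z i ^ 2) a] (D^[k] (MvPolynomial.X 0)) := by
  induction k generalizing a with
  | zero =>
    have h : HasDerivAt (fun s => r (0, z, s)) _ a :=
      (hasDerivAt_log hZ ha).congr_of_eventuallyEq (by
        filter_upwards [lt_mem_nhds ha] with s hs using r_eq_log r hr0 hreq z hs)
    simp only [zero_add, Function.iterate_one, X0op, Function.iterate_zero, id, h.deriv]
    rw [mul_div_cancel₀ _ ha.ne']
    simp
  | succ k ih =>
    have h : HasDerivAt (fun s => (X0op μ ν)^[k + 1] r (0, z, s)) _ a :=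
      (hasDerivAt_eval hZ ha (D^[k] (MvPolynomial.X 0))).congr_of_eventuallyEq (by
        filter_upwards [lt_mem_nhds ha] with s hs using ih hs)
    rw [Function.iterate_succ_apply' _ (k + 1), Function.iterate_succ_apply' D]
    change a * deriv (fun s => (X0op μ ν)^[k + 1] r (0, z, s)) a = _
    rw [h.deriv, mul_div_cancel₀ _ ha.ne']

/-! ### Limits along the curve -/

lemma tendsto_wf (c : ℝ) : Tendsto (fun a => wf ((c * a) ^ 2) a) atTop atTop := by
  refine tendsto_atTop_mono' _ ?_ (tendsto_id.atTop_div_const (two_pos : (0 : ℝ) < 2))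
  filter_upwards [eventually_gt_atTop 0] with a ha
  have : 0 ≤ (1 + (c * a) ^ 2) / a := by positivity
  simp only [wf, id]; linarith

lemma tendsto_vf_div_wf (c : ℝ) :
    Tendsto (fun a => vf ((c * a) ^ 2) a / wf ((c * a) ^ 2) a) atTop
      (𝓝 ((1 - c ^ 2) / (1 + c ^ 2))) := by
  have h : Tendsto (fun a : ℝ => (a⁻¹) ^ 2) atTop (𝓝 0) := by
    simpa using (tendsto_inv_atTop_zero (𝕜 := ℝ)).pow 2
  have h2 := (h.const_sub (1 - c ^ 2)).div (h.const_add (1 + c ^ 2)) (by positivity)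
  simp only [sub_zero, add_zero] at h2
  refine h2.congr' ?_
  filter_upwards [eventually_gt_atTop 0] with a ha
  simp only [vf, wf, Pi.div_apply]
  field_simp
  ring

lemma tendsto_wf_div_Sf {c : ℝ} (hc : 0 < c) :
    Tendsto (fun a => wf ((c * a) ^ 2) a / Sf ((c * a) ^ 2) a) atTop (𝓝 1) := by
  have h := (((tendsto_inv_atTop_zero.comp (tendsto_wf c)).pow 2).const_sub 1).sqrt.inv₀
    (by norm_num)
  simp only [ne_eq, OfNat.ofNat_ne_zero, not_false_eq_true, zero_pow, sub_zero, Real.sqrt_one,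
    inv_one] at h
  refine h.congr' ?_
  filter_upwards [eventually_gt_atTop 0] with a ha
  have hw : 0 < wf ((c * a) ^ 2) a := wf_pos (by positivity) ha
  have h1 : 1 - ((wf ((c * a) ^ 2) a)⁻¹) ^ 2 =
      (wf ((c * a) ^ 2) a ^ 2 - 1) / wf ((c * a) ^ 2) a ^ 2 := by
    rw [sub_div, div_self (by positivity), inv_pow, one_div]
  simp only [Function.comp]
  rw [h1, Real.sqrt_div' _ (sq_nonneg _), Real.sqrt_sq hw.le, inv_div, Sf]

theorem distance_derivative_no_decay (μ ν : ℕ) (hμ : Even μ) (hν : 1 ≤ ν)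
    (r : Pt μ ν → ℝ)
    (hr0 : ∀ p : Pt μ ν, 0 < p.2.2 → 0 ≤ r p)
    (hreq : ∀ p : Pt μ ν, 0 < p.2.2 → Real.cosh (r p / 2) ^ 2 = coshExpr μ ν p)
    (k : ℕ) (hk : 1 ≤ k) :
    ∃ y : ℝ, y ∈ Set.Ioo (-1 : ℝ) 1 ∧ ∃ b : ℝ, b ≠ 0 ∧
      Filter.Tendsto
        (fun a : ℝ =>
          r (0, Pi.single (⟨0, hν⟩ : Fin ν) (Real.sqrt ((1 - y) / (1 + y)) * a), a))
        Filter.atTop Filter.atTop ∧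
      Filter.Tendsto
        (fun a : ℝ =>
          (X0op μ ν)^[k] r
            (0, Pi.single (⟨0, hν⟩ : Fin ν) (Real.sqrt ((1 - y) / (1 + y)) * a), a))
        Filter.atTop (nhds b) := by
  obtain ⟨m, rfl⟩ : ∃ m, k = m + 1 := ⟨k - 1, by omega⟩
  have hP : spec (D^[m] (MvPolynomial.X 0)) ≠ 0 := by
    intro h
    have := natDegree_spec_iterate m
    rw [h] at this
    simp at this
  obtain ⟨y, hy, hyP⟩ := exists_eval_ne_zero _ hP
  have hy1 : 0 < 1 + y := by linarith [hy.1]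
  have hy2 : 0 < 1 - y := by linarith [hy.2]
  refine ⟨y, hy, _, hyP, ?_⟩
  set c := Real.sqrt ((1 - y) / (1 + y)) with hcdef
  have hc : 0 < c := Real.sqrt_pos.2 (by positivity)
  have hc2 : c ^ 2 = (1 - y) / (1 + y) := Real.sq_sqrt (by positivity)
  have hcy : (1 - c ^ 2) / (1 + c ^ 2) = y := by
    rw [hc2]; field_simp; ring
  have hsum : ∀ t : ℝ, ∑ i, (Pi.single (⟨0, hν⟩ : Fin ν) t : Fin ν → ℝ) i ^ 2 = t ^ 2 := by
    intro t
    rw [Finset.sum_eq_single (⟨0, hν⟩ : Fin ν)]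
    · simp
    · intro i _ hi
      simp [Pi.single_eq_of_ne hi]
    · simp
  constructor
  · refine tendsto_atTop_mono' _ ?_ (Real.tendsto_log_atTop.comp (tendsto_wf c))
    filter_upwards [eventually_gt_atTop 0] with a ha
    rw [r_eq_log r hr0 hreq _ ha, hsum]
    exact Real.log_le_log (wf_pos (by positivity) ha) (le_add_of_nonneg_right (Real.sqrt_nonneg _))
  · have hC := tendsto_wf_div_Sf hc
    have hf : Tendsto (fun a => vf ((c * a) ^ 2) a / Sf ((c * a) ^ 2) a) atTop (𝓝 y) := by
      have h := (tendsto_vf_div_wf c).mul hC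
      rw [hcy, mul_one] at h
      refine h.congr' ?_
      filter_upwards [eventually_gt_atTop 0] with a ha
      have hw : 0 < wf ((c * a) ^ 2) a := wf_pos (by positivity) ha
      exact div_mul_div_cancel₀ hw.ne'
    have hvec : Tendsto (fun a => ![vf ((c * a) ^ 2) a / Sf ((c * a) ^ 2) a,
        wf ((c * a) ^ 2) a / Sf ((c * a) ^ 2) a]) atTop (𝓝 ![y, 1]) := by
      rw [tendsto_pi_nhds]
      intro i
      fin_cases i
      · simpa using hf
      · simpa using hC
    rw [eval_spec]
    refine (((MvPolynomial.continuous_eval (D^[m] (MvPolynomial.X 0))).tendsto _).comp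
      hvec).congr' ?_
    filter_upwards [eventually_gt_atTop 0] with a ha
    rw [iterate_X0op r hr0 hreq _ (by rw [hsum]; positivity) m ha, hsum]
    rfl

end DR
end
end

section
/- For all b, q ∈ ℕ there exists a constant C > 0 such that |Φ_{2b,2q,t}(r)| ≤ C r^{2b} Ψ_{2b+2q+1}(r,t) h_t(r) for all t > 0 and all 0 < r ≤ 1, where Φ_{0,2q,t} = h_t^{(2q+1)} and, for b ≥ 1, Φ_{2b,2q,t}(r) = Σ_{ℓ=0}^{2b−1} ((−1)^ℓ r^ℓ / ℓ!) h_t^{(2q+ℓ+1)}(r). -/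
/-!
The estimate rests on one structural fact: on `r > 0` the heat kernel is `h_t(r) = H_t(cosh r)`, where
`H_t` is completely monotone on `(1, ∞)` and satisfies `|H_t^{(j)}| ≤ C_j (1 + 1/t)^j H_t` with `C_j`
independent of `t` (`heat_eq`, `nd_iterate_le`). It is obtained as follows. The derivative of
`arcosh² u` is `2 arcosh u / sinh (arcosh u) = ∫ (cosh x + u)⁻¹ dx`, a bounded completely monotone
function, so `e^{-arcosh² u / t}` is completely monotone, and each derivative costs a factor
`1 + 1/t`. In the variables `cosh (r/2)` and `cosh r` the operators in the definition of `h_t` are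
multiples of `-d/du`; the passage from `cosh (r/2)` to `cosh r` is composition with `√((u + 1)/2)`,
whose derivative is bounded and completely monotone; and for odd `ν` the Abel integral is a
superposition of translates. All these operations preserve the class `CM`.

Differentiating `H_t(cosh r)` gives sums of terms `sinh^a r cosh^b r H_t^{(j)}(cosh r)` whose exponents
are constrained by the class `W`, and hence `|h_t^{(k)}| ≤ C Psi_k h_t` on `(0, 1]` (`W.bound`). This is
the case `b = 0`. For `b ≥ 1` there are two regimes. If `t < r²`, then `r (1 + 1/√t + r/t) ≥ 1` and every
term of `Φ` separately obeys the bound. If `r² ≤ t`, the derivative of `Φ` telescopes to one term of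
size `r^{2b-1} Psi_{2b+2q+1} h_t`; the values of `h_t` on `(0, r]` are bounded by a multiple of `h_t(r)`
(`harnack`), and `Φ` vanishes at the origin, so integrating from `0` to `r` gives the remaining
factor `r`.
-/

open Real MeasureTheory Filter Topology

noncomputable section

namespace DR

section HeatKernel

open Set

/-! ### Completely monotone families -/

variable {ι κ : Type*}

/-- Quantitative complete monotonicity of order `n` on `S` for a family `f`: `(-1)^k f_i^{(k)}` is
nonnegative on `S` for `k ≤ n`, and `(-1)^{k+1} f_i^{(k+1)} ≤ C L_i (-1)^k f_i^{(k)}` for `k < n`,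
where `C` does not depend on `i`. The function `g` is the negative derivative of `f`. -/
def CM (L : ι → ℝ) (S : Set ℝ) : ℕ → (ι → ℝ → ℝ) → Prop
  | 0, f => ∀ i, ∀ x ∈ S, 0 ≤ f i x
  | n + 1, f => (∀ i, ∀ x ∈ S, 0 ≤ f i x) ∧ ∃ g : ι → ℝ → ℝ,
      (∀ i, ∀ x ∈ S, HasDerivAt (f i) (-(g i x)) x) ∧
      (∃ C : ℝ, 0 ≤ C ∧ ∀ i, ∀ x ∈ S, g i x ≤ C * L i * f i x) ∧ CM L S n g

namespace CM

variable {L : ι → ℝ} {S : Set ℝ} {n : ℕ} {f g : ι → ℝ → ℝ}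

theorem nonneg (h : CM L S n f) (i : ι) {x : ℝ} (hx : x ∈ S) : 0 ≤ f i x := by
  cases n with
  | zero => exact h i x hx
  | succ n => exact h.1 i x hx

theorem of_succ : ∀ {n : ℕ} {f : ι → ℝ → ℝ}, CM L S (n + 1) f → CM L S n f
  | 0, _, h => h.1
  | _ + 1, _, ⟨h0, g, hg, hC, hn⟩ => ⟨h0, g, hg, hC, of_succ hn⟩

theorem congr (hS : IsOpen S) : ∀ {n : ℕ} {f g : ι → ℝ → ℝ}, CM L S n f →
    (∀ i, ∀ x ∈ S, f i x = g i x) → CM L S n g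
  | 0, _, _, h, e => fun i x hx => e i x hx ▸ h i x hx
  | _ + 1, f, g, ⟨h0, d, hd, ⟨C, hC0, hC⟩, hn⟩, e => by
    refine ⟨fun i x hx => e i x hx ▸ h0 i x hx, d, fun i x hx => ?_, ⟨C, hC0, fun i x hx => ?_⟩, hn⟩
    · refine (hd i x hx).congr_of_eventuallyEq ?_
      filter_upwards [hS.mem_nhds hx] with y hy using (e i y hy).symm
    · rw [← e i x hx]; exact hC i x hx

theorem reindex (σ : κ → ι) : ∀ {n : ℕ} {f : ι → ℝ → ℝ}, CM L S n f →
    CM (fun k => L (σ k)) S n (fun k => f (σ k))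
  | 0, _, h => fun k x hx => h (σ k) x hx
  | _ + 1, _, ⟨h0, d, hd, ⟨C, hC0, hC⟩, hn⟩ =>
    ⟨fun k x hx => h0 (σ k) x hx, fun k => d (σ k), fun k x hx => hd (σ k) x hx,
      ⟨C, hC0, fun k x hx => hC (σ k) x hx⟩, reindex σ hn⟩

theorem smul {c : ι → ℝ} (hc : ∀ i, 0 ≤ c i) : ∀ {n : ℕ} {f : ι → ℝ → ℝ}, CM L S n f →
    CM L S n (fun i x => c i * f i x)
  | 0, _, h => fun i x hx => mul_nonneg (hc i) (h i x hx)
  | _ + 1, f, ⟨h0, d, hd, ⟨C, hC0, hC⟩, hn⟩ => by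
    refine ⟨fun i x hx => mul_nonneg (hc i) (h0 i x hx), fun i x => c i * d i x, fun i x hx => ?_,
      ⟨C, hC0, fun i x hx => ?_⟩, smul hc hn⟩
    · simpa using (hd i x hx).const_mul (c i)
    · nlinarith [mul_le_mul_of_nonneg_left (hC i x hx) (hc i)]

theorem add (hL : ∀ i, 0 ≤ L i) : ∀ {n : ℕ} {f g : ι → ℝ → ℝ}, CM L S n f → CM L S n g →
    CM L S n (fun i x => f i x + g i x)
  | 0, _, _, h, h' => fun i x hx => add_nonneg (h i x hx) (h' i x hx)
  | _ + 1, f, g, ⟨h0, d, hd, ⟨C, hC0, hC⟩, hn⟩, ⟨h0', d', hd', ⟨C', hC0', hC'⟩, hn'⟩ => by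
    refine ⟨fun i x hx => add_nonneg (h0 i x hx) (h0' i x hx), fun i x => d i x + d' i x,
      fun i x hx => ?_, ⟨C + C', by positivity, fun i x hx => ?_⟩, add hL hn hn'⟩
    · exact ((hd i x hx).add (hd' i x hx)).congr_deriv (by ring)
    · have h1 := mul_nonneg (mul_nonneg hC0 (hL i)) (h0' i x hx)
      have h2 := mul_nonneg (mul_nonneg hC0' (hL i)) (h0 i x hx)
      nlinarith [hC i x hx, hC' i x hx]

theorem mul (hL : ∀ i, 0 ≤ L i) : ∀ {n : ℕ} {f g : ι → ℝ → ℝ}, CM L S n f → CM L S n g →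
    CM L S n (fun i x => f i x * g i x)
  | 0, _, _, h, h' => fun i x hx => mul_nonneg (h i x hx) (h' i x hx)
  | n + 1, f, g, hf, hg => by
    have hfn := of_succ hf
    have hgn := of_succ hg
    obtain ⟨h0, d, hd, ⟨C, hC0, hC⟩, hn⟩ := hf
    obtain ⟨h0', d', hd', ⟨C', hC0', hC'⟩, hn'⟩ := hg
    refine ⟨fun i x hx => mul_nonneg (h0 i x hx) (h0' i x hx),
      fun i x => d i x * g i x + f i x * d' i x,
      fun i x hx => ?_, ⟨C + C', by positivity, fun i x hx => ?_⟩,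
        add hL (mul hL hn hgn) (mul hL hfn hn')⟩
    · exact ((hd i x hx).mul (hd' i x hx)).congr_deriv (by ring)
    · nlinarith [mul_le_mul_of_nonneg_right (hC i x hx) (h0' i x hx),
        mul_le_mul_of_nonneg_left (hC' i x hx) (h0 i x hx)]

/-- Composition with `v i`, where `v i` has a completely monotone derivative bounded by a constant
(a Bernstein-type function). The weight `L` is unchanged because `v' ≤ B` uniformly. -/
theorem comp (hL : ∀ i, 0 ≤ L i) {T : Set ℝ} {v w : ι → ℝ → ℝ} {B : ℝ}
    (hv : ∀ i, ∀ x ∈ S, HasDerivAt (v i) (w i x) x) (hvT : ∀ i, ∀ x ∈ S, v i x ∈ T)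
    (hB : ∀ i, ∀ x ∈ S, w i x ≤ B) (hB0 : 0 ≤ B) :
    ∀ {n : ℕ} {f : ι → ℝ → ℝ}, CM L S n w → CM L T n f → CM L S n (fun i x => f i (v i x))
  | 0, _, _, h => fun i x hx => h i _ (hvT i x hx)
  | n + 1, f, hw, ⟨h0, d, hd, ⟨C, hC0, hC⟩, hn⟩ => by
    refine ⟨fun i x hx => h0 i _ (hvT i x hx), fun i x => d i (v i x) * w i x, fun i x hx => ?_,
      ⟨C * B, by positivity, fun i x hx => ?_⟩,
        mul hL (comp hL hv hvT hB hB0 (of_succ hw) hn) (of_succ hw)⟩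
    · exact ((hd i _ (hvT i x hx)).comp x (hv i x hx)).congr_deriv (by ring)
    · have h1 := hn.nonneg i (hvT i x hx)
      have h2 := mul_le_mul_of_nonneg_left (hB i x hx) h1
      have h3 := mul_le_mul_of_nonneg_right (hC i _ (hvT i x hx)) hB0
      nlinarith

theorem const (hL : ∀ i, 0 ≤ L i) (c : ι → ℝ) (hc : ∀ i, 0 ≤ c i) :
    ∀ n, CM L S n (fun i _ => c i)
  | 0 => fun i _ _ => hc i
  | n + 1 => ⟨fun i _ _ => hc i, fun _ _ => 0, fun i x _ => by simpa using hasDerivAt_const x (c i),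
      ⟨0, le_rfl, by simp⟩, const hL _ (fun _ => le_rfl) n⟩

theorem hasDerivAt (h : CM L S (n + 1) f) (i : ι) {x : ℝ} (hx : x ∈ S) :
    HasDerivAt (f i) (deriv (f i) x) x := by
  obtain ⟨_, d, hd, _⟩ := h
  exact (hd i x hx).differentiableAt.hasDerivAt

theorem neg_deriv (hS : IsOpen S) (h : CM L S (n + 1) f) :
    CM L S n (fun i x => -deriv (f i) x) := by
  obtain ⟨_, d, hd, _, hn⟩ := h
  exact hn.congr hS fun i x hx => by rw [(hd i x hx).deriv]; simp

theorem bound (h : CM L S (n + 1) f) :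
    ∃ C : ℝ, 0 ≤ C ∧ ∀ i, ∀ x ∈ S, -deriv (f i) x ≤ C * L i * f i x := by
  obtain ⟨_, d, hd, ⟨C, hC0, hC⟩, hn⟩ := h
  exact ⟨C, hC0, fun i x hx => by rw [(hd i x hx).deriv]; simpa using hC i x hx⟩

theorem antitoneOn {a : ℝ} (h : CM L (Ioi a) (n + 1) f) (i : ι) : AntitoneOn (f i) (Ioi a) := by
  refine antitoneOn_of_deriv_nonpos (convex_Ioi a)
    (fun x hx => (h.hasDerivAt i hx).continuousAt.continuousWithinAt)
    (fun x hx => (h.hasDerivAt i (interior_subset hx)).differentiableAt.differentiableWithinAt)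
    fun x hx => ?_
  have := (h.neg_deriv isOpen_Ioi).nonneg i (interior_subset hx)
  linarith

/-- Superpositions: integrating a family over a parameter `y`, with constants uniform in `y`. The
bound `-F' ≤ C L F` together with monotonicity of `F` supplies the domination needed to
differentiate under the integral sign. -/
theorem integral (hL : ∀ i, 0 ≤ L i) {Y : Type*} [MeasurableSpace Y] (m : Measure Y) {a : ℝ} :
    ∀ {n : ℕ} {F : ι × Y → ℝ → ℝ}, CM (fun p : ι × Y => L p.1) (Ioi a) n F →
    (∀ i, ∀ x ∈ Ioi a, Integrable (fun y => F (i, y) x) m) →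
    CM L (Ioi a) n (fun i x => ∫ y, F (i, y) x ∂m)
  | 0, _, h, _ => fun i x hx => integral_nonneg fun y => h (i, y) x hx
  | n + 1, F, h, hint => by
    have hanti := h.antitoneOn
    obtain ⟨h0, d, hd, ⟨C, hC0, hC⟩, hn⟩ := h
    have key : ∀ i, ∀ x ∈ Ioi a, Integrable (fun y => -d (i, y) x) m ∧
        HasDerivAt (fun x => ∫ y, F (i, y) x ∂m) (∫ y, -d (i, y) x ∂m) x := by
      intro i x hx
      have hx' : a < x := hx
      have hmid : (a + x) / 2 ∈ Ioi a := by simp only [mem_Ioi]; linarith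
      refine hasDerivAt_integral_of_dominated_loc_of_deriv_le (s := Ioi ((a + x) / 2))
        (F := fun x y => F (i, y) x) (F' := fun x y => -d (i, y) x)
        (bound := fun y => C * L i * F (i, y) ((a + x) / 2))
        (Ioi_mem_nhds (by linarith)) ?_ (hint i x hx) ?_ ?_ ((hint i _ hmid).const_mul _) ?_
      · filter_upwards [Ioi_mem_nhds hx'] with z hz using (hint i z hz).aestronglyMeasurable
      · -- the derivative is a pointwise limit of difference quotients
        refine aestronglyMeasurable_of_tendsto_ae atTop
          (f := fun (k : ℕ) y => (((1 : ℝ) / (k + 1)))⁻¹ •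
            (F (i, y) (x + 1 / ((k : ℝ) + 1)) - F (i, y) x)) (fun k => ?_) ?_
        · refine (((hint i _ ?_).sub (hint i x hx)).smul (((1 : ℝ) / (k + 1))⁻¹)).aestronglyMeasurable
          have : (0 : ℝ) < 1 / ((k : ℝ) + 1) := by positivity
          simp only [mem_Ioi]; linarith
        · refine Eventually.of_forall fun y => ?_
          have h1 := (hd (i, y) x hx).tendsto_slope_zero_right
          have h2 : Tendsto (fun k : ℕ => (1 : ℝ) / ((k : ℝ) + 1)) atTop (𝓝[>] 0) :=
            tendsto_nhdsWithin_iff.2 ⟨tendsto_one_div_add_atTop_nhds_zero_nat,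
              Eventually.of_forall fun k => by simp only [mem_Ioi]; positivity⟩
          exact h1.comp h2
      · refine Eventually.of_forall fun y z hz => ?_
        have hz1 : (a + x) / 2 < z := hz
        have hz' : z ∈ Ioi a := by simp only [mem_Ioi]; linarith
        rw [norm_neg, Real.norm_of_nonneg (hn.nonneg (i, y) hz')]
        refine (hC (i, y) z hz').trans (mul_le_mul_of_nonneg_left ?_ (mul_nonneg hC0 (hL i)))
        exact hanti (i, y) hmid hz' hz1.le
      · refine Eventually.of_forall fun y z hz => hd (i, y) z ?_
        have hz1 : (a + x) / 2 < z := hz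
        simp only [mem_Ioi]; linarith
    have hdint : ∀ i, ∀ x ∈ Ioi a, Integrable (fun y => d (i, y) x) m := fun i x hx => by
      simpa using (key i x hx).1.neg
    refine ⟨fun i x hx => integral_nonneg fun y => h0 (i, y) x hx, fun i x => ∫ y, d (i, y) x ∂m,
      fun i x hx => ?_, ⟨C, hC0, fun i x hx => ?_⟩, integral hL m hn hdint⟩
    · rw [← integral_neg]; exact (key i x hx).2
    · rw [← integral_const_mul]
      exact integral_mono (hdint i x hx) ((hint i x hx).const_mul _) fun y => hC (i, y) x hx

end CM

/-! ### The heat kernel as a function of `cosh r` -/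

namespace CM

variable {ι : Type*} {L : ι → ℝ} {S : Set ℝ}

theorem rpow (hL : ∀ i, 1 ≤ L i) (d : ι → ℝ) {a : ℝ} (hd : ∀ i, 1 ≤ d i + a) :
    ∀ (n : ℕ) (c p : ℝ), 0 ≤ c → 0 ≤ p → CM L (Ioi a) n (fun i u => c * (d i + u) ^ (-p))
  | 0, c, p, hc, _ => fun i u hu => by
    have : 0 ≤ d i + u := by have := hd i; have : a < u := hu; linarith
    positivity
  | n + 1, c, p, hc, hp => by
    have hpos : ∀ i, ∀ u ∈ Ioi a, 1 ≤ d i + u := fun i u hu => by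
      have := hd i; have : a < u := hu; linarith
    refine ⟨fun i u hu => ?_, fun i u => (c * p) * (d i + u) ^ (-(p + 1)), fun i u hu => ?_,
      ⟨p, hp, fun i u hu => ?_⟩, rpow hL d hd n _ _ (by positivity) (by positivity)⟩
    · have := hpos i u hu
      positivity
    · have h1 := hpos i u hu
      have h2 : HasDerivAt (fun u => d i + u) 1 u := (hasDerivAt_id u).const_add _
      have h3 := (h2.rpow_const (p := -p) (Or.inl (by linarith))).const_mul c
      refine h3.congr_deriv ?_
      rw [show -(p + 1) = -p - 1 by ring]; ring
    · have h1 := hpos i u hu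
      have h2 : (d i + u) ^ (-(p + 1)) ≤ (d i + u) ^ (-p) :=
        Real.rpow_le_rpow_of_exponent_le h1 (by linarith)
      have h3 : 0 ≤ (d i + u) ^ (-p) := by positivity
      calc c * p * (d i + u) ^ (-(p + 1)) ≤ c * p * (d i + u) ^ (-p) := by gcongr
        _ = p * 1 * (c * (d i + u) ^ (-p)) := by ring
        _ ≤ p * L i * (c * (d i + u) ^ (-p)) := by
          have := hL i
          gcongr

theorem exp_neg {l : ι → ℝ} (hl0 : ∀ i, 0 ≤ l i) (hl : ∀ i, l i ≤ L i) :
    ∀ (n : ℕ) (c : ι → ℝ), (∀ i, 0 ≤ c i) → CM L S n (fun i x => c i * Real.exp (-(l i * x)))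
  | 0, c, hc => fun i x _ => mul_nonneg (hc i) (Real.exp_pos _).le
  | n + 1, c, hc => by
    refine ⟨fun i x _ => mul_nonneg (hc i) (Real.exp_pos _).le,
      fun i x => (c i * l i) * Real.exp (-(l i * x)), fun i x _ => ?_,
      ⟨1, zero_le_one, fun i x _ => ?_⟩, exp_neg hl0 hl n _ fun i => mul_nonneg (hc i) (hl0 i)⟩
    · have h1 : HasDerivAt (fun x => -(l i * x)) (-(l i)) x := by
        simpa [Pi.neg_def] using ((hasDerivAt_id x).const_mul (l i)).neg
      exact (h1.exp.const_mul (c i)).congr_deriv (by ring)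
    · have := mul_le_mul_of_nonneg_right (hl i) (mul_nonneg (hc i) (Real.exp_pos (-(l i * x))).le)
      nlinarith

end CM

theorem one_add_sq_le_cosh (x : ℝ) : 1 + x ^ 2 / 2 ≤ Real.cosh x := by
  have h1 : Real.cosh x = 1 + 2 * Real.sinh (x / 2) ^ 2 := by
    have h := Real.cosh_two_mul (x / 2)
    rw [Real.cosh_sq, show 2 * (x / 2) = x by ring] at h
    linarith
  have h2 : |x / 2| ≤ |Real.sinh (x / 2)| := by
    rw [Real.abs_sinh]
    exact Real.self_le_sinh_iff.2 (abs_nonneg _)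
  have h3 := sq_le_sq.2 h2
  nlinarith

theorem integrable_inv_cosh_add {u : ℝ} (hu : 1 < u) :
    Integrable (fun x : ℝ => (Real.cosh x + u)⁻¹) := by
  refine (integrable_inv_one_add_sq.const_mul 2).mono' ?_ (Eventually.of_forall fun x => ?_)
  · refine Continuous.aestronglyMeasurable (Continuous.inv₀ (by fun_prop) fun x => ?_)
    have := Real.cosh_pos x
    positivity
  · have h := one_add_sq_le_cosh x
    have h0 : 0 < Real.cosh x + u := by have := Real.cosh_pos x; positivity
    rw [Real.norm_of_nonneg (by positivity), ← div_eq_mul_inv, inv_eq_one_div,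
      div_le_div_iff₀ h0 (by positivity)]
    nlinarith

/-- The integral representation of `2r / sinh r`, which exhibits it as a completely monotone
function of `cosh r`. An antiderivative is
`(log (e^x + e^{-r}) - log (e^x + e^r)) / sinh r`. -/
theorem integral_inv_cosh_add {r : ℝ} (hr : 0 < r) :
    ∫ x : ℝ, (Real.cosh x + Real.cosh r)⁻¹ = 2 * r / Real.sinh r := by
  have hs : 0 < Real.sinh r := Real.sinh_pos_iff.2 hr
  set A : ℝ → ℝ := fun x => (Real.log (Real.exp x + Real.exp (-r)) -
    Real.log (Real.exp x + Real.exp r)) / Real.sinh r with hA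
  have hder : ∀ x, HasDerivAt A (Real.cosh x + Real.cosh r)⁻¹ x := by
    intro x
    have h1 : HasDerivAt (fun x => Real.log (Real.exp x + Real.exp (-r)))
        (Real.exp x / (Real.exp x + Real.exp (-r))) x :=
      ((Real.hasDerivAt_exp x).add_const _).log (by positivity)
    have h2 : HasDerivAt (fun x => Real.log (Real.exp x + Real.exp r))
        (Real.exp x / (Real.exp x + Real.exp r)) x :=
      ((Real.hasDerivAt_exp x).add_const _).log (by positivity)
    refine ((h1.sub h2).div_const (Real.sinh r)).congr_deriv ?_
    have h3 : 0 < Real.cosh x + Real.cosh r := add_pos (Real.cosh_pos x) (Real.cosh_pos r)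
    have e1 : 0 < Real.exp x + Real.exp (-r) := by positivity
    have e2 : 0 < Real.exp x + Real.exp r := by positivity
    rw [div_sub_div _ _ e1.ne' e2.ne', div_div, inv_eq_one_div, div_eq_div_iff (by positivity)
      (by positivity), Real.cosh_eq, Real.cosh_eq, Real.sinh_eq]
    have p1 : Real.exp x * Real.exp (-x) = 1 := by rw [← Real.exp_add]; simp
    have p2 : Real.exp r * Real.exp (-r) = 1 := by rw [← Real.exp_add]; simp
    linear_combination (Real.exp r - Real.exp (-r)) / 2 * p1 -
      (Real.exp r - Real.exp (-r)) / 2 * p2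
  have hbot : Tendsto A atBot (𝓝 (-(2 * r) / Real.sinh r)) := by
    have h1 : Tendsto (fun x => Real.log (Real.exp x + Real.exp (-r))) atBot (𝓝 (-r)) := by
      have := (Real.tendsto_exp_atBot.add_const (Real.exp (-r))).log (by positivity)
      simpa using this
    have h2 : Tendsto (fun x => Real.log (Real.exp x + Real.exp r)) atBot (𝓝 r) := by
      have := (Real.tendsto_exp_atBot.add_const (Real.exp r)).log (by positivity)
      simpa using this
    have := (h1.sub h2).div_const (Real.sinh r)
    convert this using 2; ring
  have htop : Tendsto A atTop (𝓝 0) := by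
    have h0 : Tendsto (fun x => Real.exp (-x)) atTop (𝓝 0) :=
      Real.tendsto_exp_atBot.comp tendsto_neg_atTop_atBot
    have h1 : ∀ c : ℝ, 0 < c → Tendsto (fun x => Real.log (1 + c * Real.exp (-x))) atTop (𝓝 0) := by
      intro c hc
      have := ((h0.const_mul c).const_add 1).log (by simp)
      simpa using this
    have h2 := ((h1 (Real.exp (-r)) (by positivity)).sub
      (h1 (Real.exp r) (by positivity))).div_const (Real.sinh r)
    simp only [sub_self, zero_div] at h2
    refine h2.congr fun x => ?_
    have key : ∀ c : ℝ, 0 < c → Real.log (Real.exp x + c) = x + Real.log (1 + c * Real.exp (-x)) := by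
      intro c hc
      have p1 : Real.exp x * Real.exp (-x) = 1 := by rw [← Real.exp_add]; simp
      rw [show Real.exp x + c = Real.exp x * (1 + c * Real.exp (-x)) by linear_combination (-c) * p1,
        Real.log_mul (by positivity) (by positivity), Real.log_exp]
    simp only [hA]
    rw [key _ (Real.exp_pos _), key _ (Real.exp_pos _)]
    ring
  rw [integral_of_hasDerivAt_of_tendsto hder (integrable_inv_cosh_add (Real.one_lt_cosh.2 hr.ne'))
    hbot htop]
  ring

/-- The derivative of `arcosh² u` is a superposition of the functions `(c + u)⁻¹` with `c ≥ 1`, so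
it is completely monotone in `u`: `arcosh²` is a Bernstein function of `u > 1`. -/
theorem hasDerivAt_arcosh_sq {u : ℝ} (hu : 1 < u) :
    HasDerivAt (fun u => Real.arcosh u ^ 2) (∫ x : ℝ, (Real.cosh x + u)⁻¹) u := by
  have h1 := (Real.hasDerivAt_arcosh (mem_Ioi.2 hu)).pow 2
  have h2 := integral_inv_cosh_add (Real.arcosh_pos hu)
  rw [Real.cosh_arcosh hu.le, Real.sinh_arcosh hu.le] at h2
  refine h1.congr_deriv ?_
  rw [h2]; simp; ring

theorem integral_inv_cosh_add_le {u : ℝ} (hu : 1 < u) :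
    ∫ x : ℝ, (Real.cosh x + u)⁻¹ ≤ 2 := by
  have h0 := Real.arcosh_pos hu
  have h2 := integral_inv_cosh_add h0
  rw [Real.cosh_arcosh hu.le] at h2
  rw [h2, div_le_iff₀ (Real.sinh_pos_iff.2 h0)]
  have := Real.self_le_sinh_iff.2 h0.le
  linarith

section

variable {ι : Type*} {L : ι → ℝ}

/-- The Gaussian `e^{-l r²}`, viewed as a function of `u = cosh r`, is completely monotone. The
weight may be any `L ≥ max 1 l`. -/
theorem CM.exp_arcosh_sq (hL : ∀ i, 1 ≤ L i) {l : ι → ℝ} (hl0 : ∀ i, 0 ≤ l i)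
    (hl : ∀ i, l i ≤ L i) (n : ℕ) :
    CM L (Ioi 1) n (fun i u => Real.exp (-(l i * Real.arcosh u ^ 2))) := by
  have hL0 : ∀ i, 0 ≤ L i := fun i => zero_le_one.trans (hL i)
  have h1 : CM (fun p : ι × ℝ => L p.1) (Ioi 1) n (fun p u => (Real.cosh p.2 + u)⁻¹) := by
    refine (CM.rpow (L := fun p : ι × ℝ => L p.1) (fun p => hL p.1) (fun p => Real.cosh p.2)
      (a := 1) (fun p => ?_) n 1 1 zero_le_one zero_le_one).congr isOpen_Ioi fun p u hu => ?_
    · have := Real.cosh_pos p.2; linarith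
    · rw [Real.rpow_neg_one, one_mul]
  have h2 := CM.integral hL0 volume h1 fun i u hu => integrable_inv_cosh_add hu
  have h3 := CM.exp_neg (S := univ) hl0 hl n (fun _ => 1) (fun _ => zero_le_one)
  have h4 := CM.comp hL0 (v := fun _ u => Real.arcosh u ^ 2)
    (fun i u hu => hasDerivAt_arcosh_sq hu) (fun _ _ _ => mem_univ _)
    (fun i u hu => integral_inv_cosh_add_le hu) zero_le_two h2 h3
  exact h4.congr isOpen_Ioi fun i u hu => one_mul _

/-- The change of variable from `cosh (r/2)` to `u = cosh r`, that is
`cosh (r/2) = √((u + 1)/2)`, preserves complete monotonicity. -/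
theorem CM.comp_half_angle (hL : ∀ i, 1 ≤ L i) {n : ℕ} {f : ι → ℝ → ℝ} (hf : CM L (Ioi 1) n f) :
    CM L (Ioi 1) n (fun i u => f i (Real.sqrt ((u + 1) / 2))) := by
  have hL0 : ∀ i, 0 ≤ L i := fun i => zero_le_one.trans (hL i)
  have h1 := CM.rpow hL (fun _ => 1) (a := 1) (fun _ => by norm_num) n (Real.sqrt 2 / 4) (1 / 2)
    (by positivity) (by norm_num)
  refine CM.comp hL0 (B := Real.sqrt 2 / 4) (v := fun _ u => Real.sqrt ((u + 1) / 2))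
    (T := Ioi 1) (fun i u hu => ?_) (fun i u hu => ?_) (fun i u hu => ?_) (by positivity) h1 hf
  · have hu' : (1 : ℝ) < u := hu
    have e : HasDerivAt (fun u : ℝ => (u + 1) / 2) (1 / 2) u :=
      ((hasDerivAt_id u).add_const 1).div_const 2
    refine (e.sqrt (by positivity)).congr_deriv ?_
    rw [Real.rpow_neg (by positivity), ← Real.sqrt_eq_rpow, Real.sqrt_div (by positivity),
      add_comm u 1]
    have : 0 < Real.sqrt (1 + u) := Real.sqrt_pos.2 (by positivity)
    have h2 : Real.sqrt 2 ≠ 0 := by positivity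
    field_simp
    norm_num
  · have hu' : (1 : ℝ) < u := hu
    rw [mem_Ioi, Real.lt_sqrt (by norm_num)]; linarith
  · have hu' : (1 : ℝ) < u := hu
    have : (1 + u) ^ (-(1 / 2) : ℝ) ≤ 1 :=
      Real.rpow_le_one_of_one_le_of_nonpos (by linarith) (by norm_num)
    exact mul_le_of_le_one_right (by positivity) this

/-- The operator `-d/du`, applied to each member of a family. In the variable `u = cosh r` it is
`-(1 / sinh r) d/dr`. -/
def ND (f : ι → ℝ → ℝ) : ι → ℝ → ℝ := fun i x => -deriv (f i) x

theorem CM.nd_iterate {f : ι → ℝ → ℝ} (hf : ∀ n, CM L (Ioi 1) n f) (k : ℕ) :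
    ∀ n, CM L (Ioi 1) n (ND^[k] f) := by
  induction k with
  | zero => exact hf
  | succ k ih =>
    intro n
    rw [Function.iterate_succ_apply']
    exact (ih (n + 1)).neg_deriv isOpen_Ioi

/-- In the variable `cosh r` the operator `D1` is minus the derivative. -/
theorem D1_iterate {f g : ι → ℝ → ℝ} (hf : ∀ n, CM L (Ioi 1) n f)
    (h : ∀ i, ∀ r, 0 < r → g i r = f i (Real.cosh r)) (k : ℕ) :
    ∀ i, ∀ r, 0 < r → D1^[k] (g i) r = (ND^[k] f) i (Real.cosh r) := by
  induction k with
  | zero => exact h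
  | succ k ih =>
    intro i r hr
    rw [Function.iterate_succ_apply', Function.iterate_succ_apply']
    change -(1 / Real.sinh r) * deriv (D1^[k] (g i)) r = -deriv ((ND^[k] f) i) (Real.cosh r)
    have h1 : D1^[k] (g i) =ᶠ[𝓝 r] fun r => (ND^[k] f) i (Real.cosh r) := by
      filter_upwards [Ioi_mem_nhds hr] with s hs using ih i s hs
    have h2 := (CM.nd_iterate hf k 1).hasDerivAt i (mem_Ioi.2 (Real.one_lt_cosh.2 hr.ne'))
    have h3 := h2.comp r (Real.hasDerivAt_cosh r)
    rw [h1.deriv_eq]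
    erw [h3.deriv]
    have := (Real.sinh_pos_iff.2 hr).ne'
    field_simp

/-- In the variable `cosh (r/2)` the operator `D2` is `-1/2` times the derivative, so its iterates
preserve complete monotonicity in that variable. -/
theorem D2_iterate {f : ι → ℝ → ℝ} {g : ι → ℝ → ℝ}
    (hf : ∀ n, CM L (Ioi 1) n f)
    (h : ∀ i, ∀ r, 0 < r → g i r = f i (Real.cosh (r / 2))) (k : ℕ) :
    ∃ F : ι → ℝ → ℝ, (∀ n, CM L (Ioi 1) n F) ∧
      ∀ i, ∀ r, 0 < r → D2^[k] (g i) r = F i (Real.cosh (r / 2)) := by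
  induction k with
  | zero => exact ⟨f, hf, h⟩
  | succ k ih =>
    obtain ⟨F, hF, e⟩ := ih
    refine ⟨fun i x => 1 / 2 * ND F i x,
      fun n => ((hF (n + 1)).neg_deriv isOpen_Ioi).smul fun _ => by norm_num, fun i r hr => ?_⟩
    rw [Function.iterate_succ_apply']
    change -(1 / Real.sinh (r / 2)) * deriv (D2^[k] (g i)) r =
      1 / 2 * -deriv (F i) (Real.cosh (r / 2))
    have h1 : D2^[k] (g i) =ᶠ[𝓝 r] fun r => F i (Real.cosh (r / 2)) := by
      filter_upwards [Ioi_mem_nhds hr] with s hs using e i s hs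
    have hr2 : 0 < r / 2 := by positivity
    have h2 := (hF 1).hasDerivAt i (mem_Ioi.2 (Real.one_lt_cosh.2 hr2.ne'))
    have h4 : HasDerivAt (fun r : ℝ => r / 2) (1 / 2) r := (hasDerivAt_id r).div_const 2
    have h3 := h2.comp r h4.cosh
    rw [h1.deriv_eq]
    erw [h3.deriv]
    have := (Real.sinh_pos_iff.2 hr2).ne'
    field_simp

/-- The Abel integrand is integrable: near `0` the factor `y^{-1/2}` is integrable and
`-f'` is bounded, while on `(1, ∞)` the factor is at most `1` and `∫ -f'` converges because `f` is
decreasing and nonnegative. Absolute values `|y|` make the integrand nonnegative for every real `y`,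
so that all families may be indexed by `ℝ`. -/
theorem integrableOn_inv_sqrt_mul (hf : ∀ n, CM L (Ioi 1) n (f : ι → ℝ → ℝ)) (i : ι) {u : ℝ}
    (hu : 1 < u) :
    IntegrableOn (fun y => (Real.sqrt |y|)⁻¹ * ND f i (u + |y|)) (Ioi 0) := by
  have hN : ∀ n, CM L (Ioi 1) n (ND f) := CM.nd_iterate hf 1
  have hmem : ∀ y : ℝ, 0 ≤ y → u + y ∈ Ioi (1 : ℝ) := fun y hy => by
    simp only [mem_Ioi]; linarith
  have hcont : ContinuousOn (fun y => (Real.sqrt |y|)⁻¹ * ND f i (u + |y|)) (Ioi 0) := by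
    intro y hy
    have hy0 : (0 : ℝ) < y := hy
    refine ContinuousAt.continuousWithinAt (ContinuousAt.mul (ContinuousAt.inv₀ (by fun_prop) ?_) ?_)
    · have : 0 < |y| := abs_pos.2 hy0.ne'
      positivity
    · exact ((hN 1).hasDerivAt i (hmem |y| (abs_nonneg y))).continuousAt.comp
        (f := fun y => u + |y|) (by fun_prop)
  have hmeas := hcont.aestronglyMeasurable (μ := volume) measurableSet_Ioi
  have hsplit : Ioi (0 : ℝ) = Ioc 0 1 ∪ Ioi 1 := (Ioc_union_Ioi_eq_Ioi zero_le_one).symm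
  rw [hsplit]
  refine IntegrableOn.union ?_ ?_
  · have h1 : IntegrableOn (fun y : ℝ => y ^ (-(1 / 2) : ℝ)) (Ioc 0 1) :=
      (intervalIntegrable_iff_integrableOn_Ioc_of_le zero_le_one).1
        (intervalIntegral.intervalIntegrable_rpow' (by norm_num))
    refine (h1.mul_const (ND f i u)).mono' (hmeas.mono_measure
      (Measure.restrict_mono Ioc_subset_Ioi_self le_rfl)) ?_
    refine (ae_restrict_mem measurableSet_Ioc).mono fun y hy => ?_
    have h0 := (hN 0).nonneg i (hmem |y| (abs_nonneg y))
    rw [Real.norm_of_nonneg (by positivity), abs_of_pos hy.1, Real.rpow_neg hy.1.le,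
      ← Real.sqrt_eq_rpow]
    refine mul_le_mul_of_nonneg_left ?_ (by positivity)
    exact (hN 1).antitoneOn i (mem_Ioi.2 hu) (hmem y hy.1.le) (by linarith [hy.1])
  · have h1 : IntegrableOn (fun y => -ND f i (u + y)) (Ioi 1) := by
      have hd : ∀ y ∈ Ici (0 : ℝ), HasDerivAt (fun y => f i (u + y)) (-ND f i (u + y)) y := by
        intro y hy
        have := ((hf 1).hasDerivAt i (hmem y hy)).comp_const_add u y
        simpa [ND] using this
      have hanti : Antitone (fun y => f i (u + max y 0)) := fun a b hab =>
        (hf 1).antitoneOn i (hmem _ (le_max_right _ _)) (hmem _ (le_max_right _ _))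
          (by gcongr)
      have hbdd : BddBelow (range fun y => f i (u + max y 0)) :=
        ⟨0, by rintro _ ⟨y, rfl⟩; exact (hf 0).nonneg i (hmem _ (le_max_right _ _))⟩
      have hlim := tendsto_atTop_ciInf hanti hbdd
      refine integrableOn_Ioi_deriv_of_nonpos' (fun y hy => hd y (zero_le_one.trans (mem_Ici.1 hy)))
        (fun y hy => ?_) (hlim.congr' ?_)
      · have := (hN 0).nonneg i (hmem y (zero_le_one.trans (le_of_lt hy)))
        linarith
      · filter_upwards [eventually_ge_atTop 0] with y hy
        rw [max_eq_left hy]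
    have h2 : IntegrableOn (fun y => ND f i (u + y)) (Ioi 1) := by simpa using h1.neg
    refine h2.mono' (hmeas.mono_measure
      (Measure.restrict_mono (Ioi_subset_Ioi zero_le_one) le_rfl)) ?_
    refine (ae_restrict_mem measurableSet_Ioi).mono fun y hy => ?_
    have hy1 : (1 : ℝ) < y := hy
    have h0 := (hN 0).nonneg i (hmem |y| (abs_nonneg y))
    rw [Real.norm_of_nonneg (by positivity)]
    rw [abs_of_pos (by linarith)] at h0 ⊢
    refine mul_le_of_le_one_left h0 (inv_le_one_of_one_le₀ ?_)
    rw [Real.one_le_sqrt]; exact hy1.le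

/-- The Abel transform of `-f'` is completely monotone with the same weight. -/
theorem CM.abel (hL : ∀ i, 0 ≤ L i) {f : ι → ℝ → ℝ} (hf : ∀ n, CM L (Ioi 1) n f) (n : ℕ) :
    CM L (Ioi 1) n (fun i u => ∫ y in Ioi 0, (Real.sqrt |y|)⁻¹ * ND f i (u + |y|)) := by
  refine CM.integral hL (volume.restrict (Ioi (0 : ℝ)))
    (F := fun p u => (Real.sqrt |p.2|)⁻¹ * ND f p.1 (u + |p.2|)) ?_
    (fun i u hu => integrableOn_inv_sqrt_mul hf i hu)
  refine CM.smul (c := fun p : ι × ℝ => (Real.sqrt |p.2|)⁻¹) (fun p => by positivity) ?_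
  refine CM.comp (f := fun p : ι × ℝ => ND f p.1) (L := fun p : ι × ℝ => L p.1) (fun p => hL p.1)
    (B := 1) (T := Ioi 1) (v := fun (p : ι × ℝ) u => u + |p.2|) (w := fun (_ : ι × ℝ) _ => 1)
    (fun p u _ => (hasDerivAt_id u).add_const _) (fun p u hu => ?_) (fun _ _ _ => le_rfl)
    zero_le_one (CM.const (fun p : ι × ℝ => hL p.1) _ (fun _ => zero_le_one) n)
    ((CM.nd_iterate hf 1 n).reindex (Prod.fst : ι × ℝ → ι))
  have hu' : (1 : ℝ) < u := hu
  have := abs_nonneg p.2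
  simp only [mem_Ioi]; linarith

/-- The substitution `y = cosh s - cosh r` in the Abel integral defining the kernel for odd `ν`. -/
theorem abel_substitution (G : ℝ → ℝ) {r : ℝ} (hr : 0 < r) :
    ∫ s in Ioi r, Real.sinh s / Real.sqrt (Real.cosh s - Real.cosh r) * G (Real.cosh s) =
      ∫ y in Ioi 0, (Real.sqrt |y|)⁻¹ * G (Real.cosh r + |y|) := by
  have himg : (fun s => Real.cosh s - Real.cosh r) '' Ioi r = Ioi 0 := by
    ext y
    simp only [mem_image, mem_Ioi]
    constructor
    · rintro ⟨s, hs, rfl⟩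
      have := Real.cosh_lt_cosh.2 (by rwa [abs_of_pos hr, abs_of_pos (hr.trans hs)] : |r| < |s|)
      linarith
    · intro hy
      have h1 : 1 ≤ Real.cosh r + y := by have := Real.one_le_cosh r; linarith
      refine ⟨Real.arcosh (Real.cosh r + y), ?_, by rw [Real.cosh_arcosh h1]; ring⟩
      have h2 : |r| < |Real.arcosh (Real.cosh r + y)| := by
        rw [← Real.cosh_lt_cosh, Real.cosh_arcosh h1]; linarith
      rwa [abs_of_pos hr, abs_of_nonneg (Real.arcosh_nonneg h1)] at h2
  rw [← himg, integral_image_eq_integral_abs_deriv_smul (f' := Real.sinh) measurableSet_Ioi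
    (fun s _ => ((Real.hasDerivAt_cosh s).sub_const _).hasDerivWithinAt)]
  · refine setIntegral_congr_fun measurableSet_Ioi fun s hs => ?_
    have hs' : r < s := hs
    have h1 := Real.cosh_lt_cosh.2 (by rwa [abs_of_pos hr, abs_of_pos (hr.trans hs)] : |r| < |s|)
    have h2 : 0 < Real.sinh s := Real.sinh_pos_iff.2 (hr.trans hs)
    simp only [smul_eq_mul]
    rw [abs_of_pos h2, abs_of_pos (sub_pos.2 h1), add_sub_cancel]
    ring
  · intro a ha b hb hab
    have ha' : r < a := ha
    have hb' : r < b := hb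
    have h1 : Real.cosh a = Real.cosh b := by simpa using hab
    rw [← Real.arcosh_cosh (hr.trans ha').le, h1, Real.arcosh_cosh (hr.trans hb').le]

end

/-- The heat kernel is a function `H_t` of `cosh r` on `r > 0`, and the family `(H_t)` is completely
monotone to all orders with weight `1 + 1/t` and constants independent of `t`. -/
theorem heat_eq (μ ν : ℕ) : ∃ H : {t : ℝ // 0 < t} → ℝ → ℝ,
    (∀ n, CM (fun t : {t : ℝ // 0 < t} => 1 + 1 / (t : ℝ)) (Ioi 1) n H) ∧
    ∀ (t : {t : ℝ // 0 < t}) (r : ℝ), 0 < r → heat μ ν t r = H t (Real.cosh r) := by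
  have hL : ∀ t : {t : ℝ // 0 < t}, 1 ≤ 1 + 1 / (t : ℝ) := fun t => by
    have := t.2
    have : 0 < 1 / (t : ℝ) := by positivity
    linarith
  have hL0 : ∀ t : {t : ℝ // 0 < t}, 0 ≤ 1 + 1 / (t : ℝ) := fun t => zero_le_one.trans (hL t)
  have h1 := CM.exp_arcosh_sq hL (l := fun t => 1 / (t : ℝ)) (fun t => by have := t.2; positivity)
    (fun t => by linarith)
  obtain ⟨F, hF, hFe⟩ := D2_iterate (L := fun t : {t : ℝ // 0 < t} => 1 + 1 / (t : ℝ))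
    (f := fun t u => Real.exp (-(1 / (t : ℝ) * Real.arcosh u ^ 2)))
    (g := fun t => gauss t) h1 (fun t r hr => by
    rw [Real.arcosh_cosh (by positivity), gauss]
    have := t.2.ne'
    congr 1
    field_simp
    ring) (μ / 2)
  set G0 : {t : ℝ // 0 < t} → ℝ → ℝ := fun t u => F t (Real.sqrt ((u + 1) / 2)) with hG0
  have hG : ∀ n, CM _ (Ioi 1) n G0 := fun n => (hF n).comp_half_angle hL
  have hGe : ∀ (t : {t : ℝ // 0 < t}) (r : ℝ), 0 < r →
      D2^[μ / 2] (gauss t) r = G0 t (Real.cosh r) := by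
    intro t r hr
    rw [hFe t r hr, hG0]
    simp only
    congr 1
    symm
    rw [Real.sqrt_eq_iff_mul_self_eq_of_pos (Real.cosh_pos _)]
    have := Real.cosh_two_mul (r / 2)
    rw [Real.sinh_sq, show 2 * (r / 2) = r by ring] at this
    linarith
  have hD := fun k => D1_iterate (g := fun t : {t : ℝ // 0 < t} => D2^[μ / 2] (gauss t)) hG hGe k
  have hcc : 0 ≤ cc μ ν 0 := by unfold cc; positivity
  by_cases hν : Even ν
  · refine ⟨fun t u => (cc μ ν 0 * (t : ℝ) ^ (-(1 : ℝ) / 2) *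
      Real.exp (-(Qc μ ν) ^ 2 * t / 4)) * (ND^[ν / 2] G0) t u, fun n =>
        (CM.nd_iterate hG _ n).smul fun t => ?_, fun t r hr => ?_⟩
    · have := t.2; positivity
    · rw [heat, if_pos hν, hD _ t r hr]
  · refine ⟨fun t u => (cc μ ν 0 * Real.pi ^ (-(1 : ℝ) / 2) * (t : ℝ) ^ (-(1 : ℝ) / 2) *
      Real.exp (-(Qc μ ν) ^ 2 * t / 4)) *
        ∫ y in Ioi 0, (Real.sqrt |y|)⁻¹ * ND (ND^[ν / 2] G0) t (u + |y|), fun n =>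
        (CM.abel hL0 (CM.nd_iterate hG _) n).smul fun t => ?_, fun t r hr => ?_⟩
    · have := t.2; positivity
    · rw [heat, if_neg hν]
      beta_reduce
      rw [← abel_substitution (ND (ND^[ν / 2] G0) t) hr]
      congr 1
      refine setIntegral_congr_fun measurableSet_Ioi fun s hs => ?_
      have h2 : (ν + 1) / 2 = ν / 2 + 1 := by
        rw [Nat.not_even_iff_odd] at hν
        obtain ⟨m, rfl⟩ := hν
        omega
      rw [h2, hD _ t s (hr.trans hs), Function.iterate_succ_apply']

/-! ### Derivatives of the heat kernel -/

section

variable {ι : Type*} {L : ι → ℝ}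

/-- The estimate `|H_i^{(j)}| ≤ C L_i^j H_i`, uniform in `i`. -/
theorem nd_iterate_le (hL : ∀ i, 0 ≤ L i) {H : ι → ℝ → ℝ} (hH : ∀ n, CM L (Ioi 1) n H) (j : ℕ) :
    ∃ C : ℝ, 0 ≤ C ∧ ∀ i, ∀ u ∈ Ioi (1 : ℝ), (ND^[j] H) i u ≤ C * L i ^ j * H i u := by
  induction j with
  | zero => exact ⟨1, zero_le_one, fun i u _ => by simp⟩
  | succ j ih =>
    obtain ⟨C, hC, h⟩ := ih
    obtain ⟨C', hC', h'⟩ := (CM.nd_iterate hH j 1).bound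
    refine ⟨C' * C, by positivity, fun i u hu => ?_⟩
    rw [Function.iterate_succ_apply']
    refine (h' i u hu).trans ?_
    calc C' * L i * (ND^[j] H) i u ≤ C' * L i * (C * L i ^ j * H i u) :=
          mul_le_mul_of_nonneg_left (h i u hu) (mul_nonneg hC' (hL i))
      _ = _ := by ring

/-- The functions `r ↦ f_i(r)` that arise as `k`-th derivatives of `H_i (cosh r)`: finite sums of
terms `c sinh^a r cosh^b r (-1)^j H_i^{(j)}(cosh r)` with `2j ≤ a + k`, `j ≤ k` and `a ≡ k` mod 2. -/
inductive W (H : ι → ℝ → ℝ) : ℕ → (ι → ℝ → ℝ) → Prop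
  | mono (k a b j : ℕ) (c : ℝ) (h1 : 2 * j ≤ a + k) (h2 : j ≤ k) (h3 : a % 2 = k % 2) :
      W H k (fun i r => c * Real.sinh r ^ a * Real.cosh r ^ b * (ND^[j] H) i (Real.cosh r))
  | plus {k : ℕ} {f g : ι → ℝ → ℝ} : W H k f → W H k g → W H k (fun i r => f i r + g i r)

/-- The class `W` is stable under differentiation, which raises the order by one. -/
theorem W.deriv {H : ι → ℝ → ℝ} (hH : ∀ n, CM L (Ioi 1) n H) {k : ℕ} {f : ι → ℝ → ℝ}
    (hf : W H k f) :
    ∃ g, W H (k + 1) g ∧ ∀ i r, 0 < r → HasDerivAt (f i) (g i r) r := by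
  induction hf with
  | mono a b j c h1 h2 h3 =>
    have key : ∀ i r, 0 < r → HasDerivAt
        (fun r => c * Real.sinh r ^ a * Real.cosh r ^ b * (ND^[j] H) i (Real.cosh r))
        (c * a * Real.sinh r ^ (a - 1) * Real.cosh r ^ (b + 1) * (ND^[j] H) i (Real.cosh r) +
         (c * b * Real.sinh r ^ (a + 1) * Real.cosh r ^ (b - 1) * (ND^[j] H) i (Real.cosh r) +
          (-c) * Real.sinh r ^ (a + 1) * Real.cosh r ^ b * (ND^[j + 1] H) i (Real.cosh r))) r := by
      intro i r hr
      have d1 := (Real.hasDerivAt_sinh r).pow a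
      have d2 := (Real.hasDerivAt_cosh r).pow b
      have d3 := ((CM.nd_iterate hH j 1).hasDerivAt i
        (mem_Ioi.2 (Real.one_lt_cosh.2 hr.ne'))).comp r (Real.hasDerivAt_cosh r)
      refine ((((d1.const_mul c).mul d2)).mul d3).congr_deriv ?_
      have e : _root_.deriv ((ND^[j] H) i) (Real.cosh r) =
          -(ND^[j + 1] H) i (Real.cosh r) := by
        rw [Function.iterate_succ_apply', ND, neg_neg]
      simp only [Pi.mul_apply, Pi.pow_apply, Function.comp_apply, e]
      ring
    have w2 : W H (k + 1) fun i r =>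
        c * b * Real.sinh r ^ (a + 1) * Real.cosh r ^ (b - 1) * (ND^[j] H) i (Real.cosh r) +
          (-c) * Real.sinh r ^ (a + 1) * Real.cosh r ^ b * (ND^[j + 1] H) i (Real.cosh r) :=
      (W.mono _ _ _ _ (c * b) (by omega) (by omega) (by omega)).plus
        (W.mono _ _ _ _ (-c) (by omega) (by omega) (by omega))
    rcases Nat.eq_zero_or_pos a with rfl | ha
    · exact ⟨_, w2, fun i r hr => (key i r hr).congr_deriv (by simp)⟩
    · exact ⟨_, (W.mono (k + 1) (a - 1) (b + 1) j (c * a) (by omega) (by omega)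
        (by omega)).plus w2, key⟩
  | plus _ _ ih1 ih2 =>
    obtain ⟨g1, w1, d1⟩ := ih1
    obtain ⟨g2, w2, d2⟩ := ih2
    exact ⟨_, w1.plus w2, fun i r hr => (d1 i r hr).add (d2 i r hr)⟩

theorem W.iterate_deriv {H h : ι → ℝ → ℝ} (hH : ∀ n, CM L (Ioi 1) n H)
    (e : ∀ i r, 0 < r → h i r = H i (Real.cosh r)) (k : ℕ) :
    ∃ f, W H k f ∧ ∀ i r, 0 < r → _root_.deriv^[k] (h i) r = f i r := by
  induction k with
  | zero => exact ⟨_, W.mono 0 0 0 0 1 le_rfl le_rfl rfl, fun i r hr => by simp [e i r hr]⟩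
  | succ k ih =>
    obtain ⟨f, w, hf⟩ := ih
    obtain ⟨g, w', hg⟩ := w.deriv hH
    refine ⟨g, w', fun i r hr => ?_⟩
    rw [Function.iterate_succ_apply', ← (hg i r hr).deriv]
    refine Filter.EventuallyEq.deriv_eq ?_
    filter_upwards [Ioi_mem_nhds hr] with s hs using hf i s hs

theorem hasDerivAt_iterate {H h : ι → ℝ → ℝ} (hH : ∀ n, CM L (Ioi 1) n H)
    (e : ∀ i r, 0 < r → h i r = H i (Real.cosh r)) (k : ℕ) (i : ι) {r : ℝ} (hr : 0 < r) :
    HasDerivAt (_root_.deriv^[k] (h i)) (_root_.deriv^[k + 1] (h i) r) r := by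
  obtain ⟨f, w, hf⟩ := W.iterate_deriv hH e k
  obtain ⟨g, w', hg⟩ := w.deriv hH
  rw [Function.iterate_succ_apply']
  refine ((hg i r hr).congr_of_eventuallyEq ?_).differentiableAt.hasDerivAt
  filter_upwards [Ioi_mem_nhds hr] with s hs using hf i s hs

end

theorem sinh_le_two_mul {r : ℝ} (h0 : 0 ≤ r) (h1 : r ≤ 1) : Real.sinh r ≤ 2 * r := by
  have a1 := (abs_le.1 (Real.abs_exp_sub_one_le (x := r) (by rwa [abs_of_nonneg h0]))).2
  have a2 := (abs_le.1 (Real.abs_exp_sub_one_le (x := -r) (by rwa [abs_neg, abs_of_nonneg h0]))).1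
  rw [abs_neg] at a2
  rw [abs_of_nonneg h0] at a1 a2
  rw [Real.sinh_eq]
  linarith

theorem cosh_le_one_add_sq {r : ℝ} (h0 : 0 ≤ r) (h1 : r ≤ 1) : Real.cosh r ≤ 1 + r ^ 2 := by
  have h2 : 0 ≤ r ^ 2 / 2 := by positivity
  have h3 : r ^ 2 / 2 ≤ 1 := by nlinarith
  have a1 := (abs_le.1 (Real.abs_exp_sub_one_le (x := r ^ 2 / 2) (by rwa [abs_of_nonneg h2]))).2
  rw [abs_of_nonneg h2] at a1
  linarith [Real.cosh_le_exp_half_sq r]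

/-- The scaling inequality behind the factor `(1 + 1/√t + r/t)^k`: it is applied with `Λ = 1 + 1/t`
and `X = 1 + 1/√t + r/t`. Powers of `Λ` not exceeding `k/2` cost `X²` each; every further one is
paired with a factor `r` and costs only `X`. -/
theorem pow_mul_pow_le {r Λ X : ℝ} (hr : 0 ≤ r) (hr1 : r ≤ 1) (hΛ : 1 ≤ Λ) (hX : 1 ≤ X)
    (h2 : Λ ≤ X ^ 2) (h3 : r * Λ ≤ X) {a j k : ℕ} (ha : 2 * j ≤ a + k) (hj : j ≤ k) :
    r ^ a * Λ ^ j ≤ X ^ k := by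
  have hΛ0 : 0 ≤ Λ := by linarith
  have hX0 : 0 ≤ X := by linarith
  have key : ∀ m, Λ ^ m ≤ X ^ (2 * m) := fun m => by
    rw [pow_mul]; exact pow_le_pow_left₀ hΛ0 h2 m
  rcases le_total (2 * j) k with h | h
  · calc r ^ a * Λ ^ j ≤ 1 * X ^ (2 * j) :=
          mul_le_mul (pow_le_one₀ hr hr1) (key j) (by positivity) zero_le_one
      _ ≤ X ^ k := by rw [one_mul]; exact pow_le_pow_right₀ hX h
  · obtain ⟨m, hm⟩ := Nat.exists_eq_add_of_le h
    obtain ⟨p, rfl⟩ := Nat.exists_eq_add_of_le hj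
    obtain rfl : j = m + p := by omega
    calc r ^ a * Λ ^ (m + p) ≤ r ^ m * Λ ^ (m + p) :=
          mul_le_mul_of_nonneg_right (pow_le_pow_of_le_one hr hr1 (by omega)) (by positivity)
      _ = (r * Λ) ^ m * Λ ^ p := by rw [pow_add, mul_pow]; ring
      _ ≤ X ^ m * X ^ (2 * p) :=
          mul_le_mul (pow_le_pow_left₀ (by positivity) h3 m) (key p) (by positivity)
            (by positivity)
      _ = X ^ (m + p + p) := by rw [← pow_add]; congr 1; omega

theorem Psi_even {k : ℕ} (hk : Even k) (r t : ℝ) :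
    Psi k r t = (1 + 1 / Real.sqrt t + r / t) ^ k := by
  rw [Psi, if_pos (Or.inr hk)]

theorem Psi_odd {k : ℕ} (hk : Even k) {r : ℝ} (hr : r ≤ 1) (t : ℝ) :
    Psi (k + 1) r t = r * (1 + 1 / Real.sqrt t + r / t) ^ k * (1 + 1 / t) := by
  have : ¬ Even (k + 1) := by rw [Nat.not_even_iff_odd]; exact hk.add_one
  rw [Psi, if_neg (by rintro (h | h); exacts [absurd hr (not_le.2 h), this h]),
    Nat.add_sub_cancel]

/-- The inequalities between `1 + 1/t` and `1 + 1/√t + r/t` for `0 < r ≤ 1`. -/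
theorem scale_bounds {r t : ℝ} (ht : 0 < t) (hr : 0 < r) (hr1 : r ≤ 1) :
    1 ≤ 1 + 1 / t ∧ 1 ≤ 1 + 1 / Real.sqrt t + r / t ∧
      1 + 1 / t ≤ (1 + 1 / Real.sqrt t + r / t) ^ 2 ∧
      r * (1 + 1 / t) ≤ 1 + 1 / Real.sqrt t + r / t := by
  have h1 : 0 < 1 / t := by positivity
  have h2 : 0 < 1 / Real.sqrt t := by positivity
  have h3 : 0 < r / t := by positivity
  have h4 : (1 / Real.sqrt t) ^ 2 = 1 / t := by rw [div_pow, Real.sq_sqrt ht.le, one_pow]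
  refine ⟨by linarith, by linarith, ?_, ?_⟩
  · nlinarith [mul_pos h2 h3, mul_pos h3 h3]
  · have : r * (1 + 1 / t) = r + r / t := by ring
    linarith

theorem Psi_nonneg {k : ℕ} {r t : ℝ} (ht : 0 < t) (hr : 0 < r) : 0 ≤ Psi k r t := by
  unfold Psi
  split_ifs <;> positivity

/-- Each term of a `k`-th derivative in the class `W` is controlled by `Psi k`. For odd `k` the parity
condition provides a factor `r`, which accounts for the different shape of `Psi k` near `0`. -/
theorem pow_mul_pow_le_Psi {r t : ℝ} (ht : 0 < t) (hr : 0 < r) (hr1 : r ≤ 1) {a j k : ℕ}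
    (ha : 2 * j ≤ a + k) (hj : j ≤ k) (hp : a % 2 = k % 2) :
    r ^ a * (1 + 1 / t) ^ j ≤ Psi k r t := by
  obtain ⟨hΛ, hX, h2, h3⟩ := scale_bounds ht hr hr1
  rcases Nat.even_or_odd k with hk | hk
  · rw [Psi_even hk]
    exact pow_mul_pow_le hr.le hr1 hΛ hX h2 h3 ha hj
  · obtain ⟨k, rfl⟩ : ∃ m, k = m + 1 := ⟨k - 1, by have := hk.pos; omega⟩
    have hk' : Even k := by rw [Nat.odd_add_one, Nat.not_odd_iff_even] at hk; exact hk
    obtain ⟨a, rfl⟩ : ∃ m, a = m + 1 := ⟨a - 1, by rw [Nat.odd_iff] at hk; omega⟩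
    rw [Psi_odd hk' hr1]
    set X := 1 + 1 / Real.sqrt t + r / t
    set Λ := 1 + 1 / t
    have hra : r ^ a ≤ 1 := pow_le_one₀ hr.le hr1
    rcases j with _ | j
    · have := one_le_pow₀ (n := k) hX
      calc r ^ (a + 1) * Λ ^ 0 = r * r ^ a * 1 := by ring
        _ ≤ r * X ^ k * Λ := by gcongr; exact hra.trans this
    · have := pow_mul_pow_le hr.le hr1 hΛ hX h2 h3 (a := a) (j := j) (k := k) (by omega) (by omega)
      calc r ^ (a + 1) * Λ ^ (j + 1) = r * (r ^ a * Λ ^ j) * Λ := by ring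
        _ ≤ r * X ^ k * Λ := by gcongr

theorem Psi_mono {s r t : ℝ} (ht : 0 < t) (hs : 0 < s) (hsr : s ≤ r) (hr : r ≤ 1) (k : ℕ) :
    Psi k s t ≤ Psi k r t := by
  have h0 : 0 < r := hs.trans_le hsr
  rcases Nat.even_or_odd k with hk | hk
  · rw [Psi_even hk, Psi_even hk]
    gcongr
  · obtain ⟨k, rfl⟩ : ∃ m, k = m + 1 := ⟨k - 1, by have := hk.pos; omega⟩
    have hk' : Even k := by rw [Nat.odd_add_one, Nat.not_odd_iff_even] at hk; exact hk
    rw [Psi_odd hk' hr, Psi_odd hk' (hsr.trans hr)]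
    gcongr

/-- Each term of the sum defining `Φ` is `O(s)` as `s → 0`: for `ℓ = 0` because `Psi` of odd order
vanishes linearly, and for `ℓ ≥ 1` because of the factor `s ^ ℓ`. -/
theorem pow_mul_Psi_le {s r t : ℝ} (ht : 0 < t) (hs : 0 < s) (hsr : s ≤ r) (hr : r ≤ 1) (q ℓ : ℕ) :
    s ^ ℓ * Psi (2 * q + ℓ + 1) s t ≤ s * (Psi (2 * q + ℓ + 1) r t / r) := by
  have h0 : 0 < r := hs.trans_le hsr
  rcases ℓ with _ | ℓ
  · rw [add_zero, Psi_odd (even_two_mul q) hr, Psi_odd (even_two_mul q) (hsr.trans hr), pow_zero,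
      one_mul, mul_assoc r, mul_div_cancel_left₀ _ h0.ne', mul_assoc]
    gcongr
  · have h1 := Psi_mono ht hs hsr hr (2 * q + (ℓ + 1) + 1)
    have h2 := Psi_nonneg (k := 2 * q + (ℓ + 1) + 1) ht hs
    have h3 := Psi_nonneg (k := 2 * q + (ℓ + 1) + 1) ht h0
    have h4 : s ^ (ℓ + 1) ≤ s := by
      rw [pow_succ]; exact mul_le_of_le_one_left hs.le (pow_le_one₀ hs.le (hsr.trans hr))
    have h5 : Psi (2 * q + (ℓ + 1) + 1) r t ≤ Psi (2 * q + (ℓ + 1) + 1) r t / r := by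
      rw [le_div_iff₀ h0]; exact mul_le_of_le_one_right h3 hr
    exact mul_le_mul h4 (h1.trans h5) h2 hs.le

/-- For `t < r²` one has `r (1 + 1/√t + r/t) ≥ 1`, so lower order terms are dominated by the term of
highest order. -/
theorem pow_mul_Psi_le_of_lt {r t : ℝ} (ht : 0 < t) (hr : 0 < r) (hr1 : r ≤ 1) (htr : t < r ^ 2)
    {q b ℓ : ℕ} (hℓ : ℓ < 2 * b) :
    r ^ ℓ * Psi (2 * q + ℓ + 1) r t ≤ 3 * (r ^ (2 * b) * Psi (2 * b + 2 * q + 1) r t) := by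
  obtain ⟨hΛ, hX, h2, h3⟩ := scale_bounds ht hr hr1
  have e1 : 0 < 1 / Real.sqrt t := by positivity
  have e2 : 1 / Real.sqrt t ≤ r / t := by
    rw [div_le_div_iff₀ (by positivity) ht, one_mul]
    have h1 : Real.sqrt t ≤ r := (Real.sqrt_le_left hr.le).2 htr.le
    have h2 : Real.sqrt t * Real.sqrt t = t := Real.mul_self_sqrt ht.le
    nlinarith [Real.sqrt_nonneg t]
  have e3 : 1 ≤ r / t := by rw [le_div_iff₀ ht]; nlinarith
  have hXΛ : 1 + 1 / Real.sqrt t + r / t ≤ 3 * (r * (1 + 1 / t)) := by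
    have : r * (1 + 1 / t) = r + r / t := by ring
    linarith
  have hY : 1 ≤ r * (1 + 1 / Real.sqrt t + r / t) := by
    have e4 : 1 ≤ r * (r / t) := by
      rw [← mul_div_assoc, le_div_iff₀ ht]; nlinarith
    nlinarith
  rw [Psi_odd (k := 2 * b + 2 * q) (by simp [Nat.even_add]) hr1]
  set X := 1 + 1 / Real.sqrt t + r / t
  set Λ := 1 + 1 / t
  have hX0 : 0 < X := by linarith
  have hΛ0 : 0 < Λ := by linarith
  have hpow := pow_le_pow_right₀ hY hℓ.le
  have hrhs : r ^ (2 * b) * (r * X ^ (2 * b + 2 * q) * Λ) = (r * X) ^ (2 * b) * X ^ (2 * q) * (r * Λ) := by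
    rw [pow_add, mul_pow]; ring
  rw [hrhs]
  have hle : (r * X) ^ ℓ * X ^ (2 * q) ≤ (r * X) ^ (2 * b) * X ^ (2 * q) := by gcongr
  rcases Nat.even_or_odd ℓ with he | ho
  · rw [Psi_odd ((even_two_mul q).add he) hr1]
    calc r ^ ℓ * (r * X ^ (2 * q + ℓ) * Λ) = (r * X) ^ ℓ * X ^ (2 * q) * (r * Λ) := by
          rw [pow_add, mul_pow]; ring
      _ ≤ (r * X) ^ (2 * b) * X ^ (2 * q) * (r * Λ) := by gcongr
      _ ≤ _ := by
        have : 0 ≤ (r * X) ^ (2 * b) * X ^ (2 * q) * (r * Λ) := by positivity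
        linarith
  · rw [Psi_even (by rw [add_assoc]; exact (even_two_mul q).add ho.add_one)]
    calc r ^ ℓ * X ^ (2 * q + ℓ + 1) = (r * X) ^ ℓ * X ^ (2 * q) * X := by
          rw [pow_succ, pow_add, mul_pow]; ring
      _ ≤ (r * X) ^ (2 * b) * X ^ (2 * q) * (3 * (r * Λ)) := by gcongr
      _ = _ := by ring

section

variable {H h : {t : ℝ // 0 < t} → ℝ → ℝ}

/-- The pointwise derivative estimate `|h^{(k)}| ≤ C Psi_k h` on `(0, 1]`. -/
theorem W.bound (hH : ∀ n, CM (fun t : {t : ℝ // 0 < t} => 1 + 1 / (t : ℝ)) (Ioi 1) n H)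
    {k : ℕ} {f : {t : ℝ // 0 < t} → ℝ → ℝ} (hf : W H k f) :
    ∃ C : ℝ, 0 ≤ C ∧ ∀ (t : {t : ℝ // 0 < t}) (r : ℝ), 0 < r → r ≤ 1 →
      |f t r| ≤ C * Psi k r t * H t (Real.cosh r) := by
  induction hf with
  | mono a b j c h1 h2 h3 =>
    obtain ⟨K, hK, hb⟩ := nd_iterate_le (L := fun t : {t : ℝ // 0 < t} => 1 + 1 / (t : ℝ))
      (fun t => by have := t.2; positivity) hH j
    refine ⟨|c| * 2 ^ a * 2 ^ b * K, by positivity, fun t r hr hr1 => ?_⟩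
    have hu : Real.cosh r ∈ Ioi (1 : ℝ) := Real.one_lt_cosh.2 hr.ne'
    have a1 := (CM.nd_iterate hH j 0).nonneg t hu
    have a2 := hb t _ hu
    have a3 := (hH 0).nonneg t hu
    have a4 := (Real.sinh_pos_iff.2 hr).le
    have a5 := sinh_le_two_mul hr.le hr1
    have a6 : Real.cosh r ≤ 2 := by
      have := cosh_le_one_add_sq hr.le hr1
      nlinarith
    have a7 := (Real.cosh_pos r).le
    have a8 := pow_mul_pow_le_Psi t.2 hr hr1 h1 h2 h3
    rw [abs_mul, abs_mul, abs_mul, abs_of_nonneg a1, abs_of_nonneg (pow_nonneg a4 a),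
      abs_of_nonneg (pow_nonneg a7 b)]
    calc |c| * Real.sinh r ^ a * Real.cosh r ^ b * (ND^[j] H) t (Real.cosh r)
        ≤ |c| * (2 * r) ^ a * 2 ^ b * (K * (1 + 1 / (t : ℝ)) ^ j * H t (Real.cosh r)) := by gcongr
      _ = |c| * 2 ^ a * 2 ^ b * K * (r ^ a * (1 + 1 / (t : ℝ)) ^ j) * H t (Real.cosh r) := by
          rw [mul_pow]; ring
      _ ≤ _ := by gcongr
  | plus _ _ ih1 ih2 =>
    obtain ⟨C1, h1, b1⟩ := ih1
    obtain ⟨C2, h2, b2⟩ := ih2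
    refine ⟨C1 + C2, by positivity, fun t r hr hr1 => (abs_add_le _ _).trans ?_⟩
    linarith [b1 t r hr hr1, b2 t r hr hr1]

/-- Comparison of values in the region `r² ≤ t`: the inequality `-H' ≤ C (1 + 1/t) H` makes
`H e^{C (1 + 1/t) u}` increasing, and `(1 + 1/t)(cosh r - cosh s)` is bounded there. -/
theorem harnack (hH : ∀ n, CM (fun t : {t : ℝ // 0 < t} => 1 + 1 / (t : ℝ)) (Ioi 1) n H) :
    ∃ K : ℝ, 0 ≤ K ∧ ∀ (t : {t : ℝ // 0 < t}) (s r : ℝ), 0 < s → s ≤ r → r ≤ 1 → r ^ 2 ≤ t →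
      H t (Real.cosh s) ≤ K * H t (Real.cosh r) := by
  obtain ⟨C, hC, hb⟩ := (hH 1).bound
  refine ⟨Real.exp (2 * C), by positivity, fun t s r hs hsr hr1 hrt => ?_⟩
  have ht := t.2
  have hr := hs.trans_le hsr
  set c := C * (1 + 1 / (t : ℝ)) with hc
  have hd : ∀ u ∈ Ioi (1 : ℝ), HasDerivAt (fun u => H t u * Real.exp (c * u))
      (deriv (H t) u * Real.exp (c * u) + H t u * (Real.exp (c * u) * c)) u := fun u hu => by
    have h1 : HasDerivAt (fun u => c * u) c u := by simpa using (hasDerivAt_id u).const_mul c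
    exact ((hH 1).hasDerivAt t hu).mul h1.exp
  have hmono : MonotoneOn (fun u => H t u * Real.exp (c * u)) (Ioi 1) := by
    refine monotoneOn_of_deriv_nonneg (convex_Ioi 1)
      (fun u hu => (hd u hu).continuousAt.continuousWithinAt)
      (fun u hu => (hd u (interior_subset hu)).differentiableAt.differentiableWithinAt)
      fun u hu => ?_
    rw [(hd u (interior_subset hu)).deriv]
    have h1 := hb t u (interior_subset hu)
    have h2 := Real.exp_pos (c * u)
    have h3 : 0 ≤ deriv (H t) u + c * H t u := by linarith
    nlinarith [mul_nonneg h3 h2.le]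
  have hus : Real.cosh s ∈ Ioi (1 : ℝ) := Real.one_lt_cosh.2 hs.ne'
  have hur : Real.cosh r ∈ Ioi (1 : ℝ) := Real.one_lt_cosh.2 hr.ne'
  have hle : Real.cosh s ≤ Real.cosh r := by
    rw [Real.cosh_le_cosh, abs_of_pos hs, abs_of_pos hr]; exact hsr
  have h1 : H t (Real.cosh s) * Real.exp (c * Real.cosh s) ≤
      H t (Real.cosh r) * Real.exp (c * Real.cosh r) := hmono hus hur hle
  have h2 : c * (Real.cosh r - Real.cosh s) ≤ 2 * C := by
    have e1 := cosh_le_one_add_sq hr.le hr1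
    have e2 := Real.one_le_cosh s
    have e3 : (1 + 1 / (t : ℝ)) * r ^ 2 ≤ 2 := by
      have : r ^ 2 / t ≤ 1 := (div_le_one ht).2 hrt
      have : (1 + 1 / (t : ℝ)) * r ^ 2 = r ^ 2 + r ^ 2 / t := by ring
      nlinarith
    calc c * (Real.cosh r - Real.cosh s) ≤ c * r ^ 2 :=
          mul_le_mul_of_nonneg_left (by linarith) (by positivity)
      _ = C * ((1 + 1 / (t : ℝ)) * r ^ 2) := by rw [hc]; ring
      _ ≤ C * 2 := by gcongr
      _ = 2 * C := mul_comm _ _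
  have h3 := (hH 0).nonneg t hur
  calc H t (Real.cosh s)
      = H t (Real.cosh s) * Real.exp (c * Real.cosh s) * Real.exp (-(c * Real.cosh s)) := by
        rw [mul_assoc, ← Real.exp_add]; simp
    _ ≤ H t (Real.cosh r) * Real.exp (c * Real.cosh r) * Real.exp (-(c * Real.cosh s)) := by
        gcongr
    _ = Real.exp (c * (Real.cosh r - Real.cosh s)) * H t (Real.cosh r) := by
        rw [mul_assoc, ← Real.exp_add, mul_comm]; congr 2; ring
    _ ≤ _ := by gcongr

end

/-- The derivative of the alternating Taylor sum telescopes to its last term. -/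
theorem hasDerivAt_taylor {D : ℕ → ℝ → ℝ}
    (hD : ∀ k r, 0 < r → HasDerivAt (D k) (D (k + 1) r) r) (N : ℕ) {r : ℝ} (hr : 0 < r) :
    HasDerivAt (fun r => ∑ ℓ ∈ Finset.range (N + 1), (-1 : ℝ) ^ ℓ * r ^ ℓ / (Nat.factorial ℓ) * D ℓ r)
      ((-1 : ℝ) ^ N * r ^ N / (Nat.factorial N) * D (N + 1) r) r := by
  induction N with
  | zero => simpa using hD 0 r hr
  | succ N ih =>
    have e : (fun r => ∑ ℓ ∈ Finset.range (N + 1 + 1),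
        (-1 : ℝ) ^ ℓ * r ^ ℓ / (Nat.factorial ℓ) * D ℓ r) = fun r =>
        (∑ ℓ ∈ Finset.range (N + 1), (-1 : ℝ) ^ ℓ * r ^ ℓ / (Nat.factorial ℓ) * D ℓ r) +
          (-1 : ℝ) ^ (N + 1) * r ^ (N + 1) / (Nat.factorial (N + 1)) * D (N + 1) r := by
      funext r; rw [Finset.sum_range_succ]
    rw [e]
    have h1 : HasDerivAt (fun r : ℝ => (-1 : ℝ) ^ (N + 1) * r ^ (N + 1) / (Nat.factorial (N + 1)))
        ((-1 : ℝ) ^ (N + 1) * r ^ N / (Nat.factorial N)) r := by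
      refine (((hasDerivAt_pow (N + 1) r).const_mul ((-1 : ℝ) ^ (N + 1))).div_const
        (Nat.factorial (N + 1) : ℝ)).congr_deriv ?_
      have : (Nat.factorial N : ℝ) ≠ 0 := by positivity
      rw [Nat.factorial_succ, Nat.add_sub_cancel]
      push_cast
      field_simp
    refine (ih.add (h1.mul (hD (N + 1) r hr))).congr_deriv ?_
    ring

/-! ### Estimates of the alternating Taylor sums -/

/-- The estimate of `Φ` for `t < r²`, where there is no cancellation to exploit. -/
theorem sum_bound_of_lt {D : ℕ → ℝ → ℝ} {C : ℕ → ℝ} (hC : ∀ k, 0 ≤ C k) {t r y : ℝ} (ht : 0 < t)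
    (hr : 0 < r) (hr1 : r ≤ 1) (htr : t < r ^ 2) (hy : 0 ≤ y) {b q : ℕ}
    (hD : ∀ ℓ, |D ℓ r| ≤ C ℓ * Psi (2 * q + ℓ + 1) r t * y) :
    |∑ ℓ ∈ Finset.range (2 * b), (-1 : ℝ) ^ ℓ * r ^ ℓ / (Nat.factorial ℓ) * D ℓ r| ≤
      (3 * ∑ ℓ ∈ Finset.range (2 * b), C ℓ) * r ^ (2 * b) * Psi (2 * b + 2 * q + 1) r t * y := by
  refine (Finset.abs_sum_le_sum_abs _ _).trans ?_
  rw [Finset.mul_sum, Finset.sum_mul, Finset.sum_mul, Finset.sum_mul]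
  refine Finset.sum_le_sum fun ℓ hℓ => ?_
  have h1 := pow_mul_Psi_le_of_lt ht hr hr1 htr (q := q) (Finset.mem_range.1 hℓ)
  have h2 : (1 : ℝ) ≤ Nat.factorial ℓ := by exact_mod_cast Nat.factorial_pos ℓ
  have h3 : r ^ ℓ / (Nat.factorial ℓ : ℝ) ≤ r ^ ℓ := div_le_self (by positivity) h2
  have h4 := hC ℓ
  have h5 := Psi_nonneg (k := 2 * q + ℓ + 1) ht hr
  rw [abs_mul, abs_div, abs_mul, abs_pow, abs_neg, abs_one, one_pow, one_mul, Nat.abs_cast,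
    abs_of_nonneg (pow_nonneg hr.le ℓ)]
  calc r ^ ℓ / (Nat.factorial ℓ : ℝ) * |D ℓ r|
      ≤ r ^ ℓ * (C ℓ * Psi (2 * q + ℓ + 1) r t * y) :=
        mul_le_mul h3 (hD ℓ) (abs_nonneg _) (by positivity)
    _ = C ℓ * y * (r ^ ℓ * Psi (2 * q + ℓ + 1) r t) := by ring
    _ ≤ C ℓ * y * (3 * (r ^ (2 * b) * Psi (2 * b + 2 * q + 1) r t)) := by gcongr
    _ = _ := by ring

/-- The estimate of `Φ` from derivative bounds valid on all of `(0, r]` with a common value `y`: the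
sum tends to `0` at the origin, so it is bounded by `r` times the supremum of its derivative, which
is a single term by telescoping. -/
theorem sum_bound_of_le {D : ℕ → ℝ → ℝ} {C : ℕ → ℝ} (hC : ∀ k, 0 ≤ C k) {t r y : ℝ} (ht : 0 < t)
    (hr : 0 < r) (hr1 : r ≤ 1) (hy : 0 ≤ y) {N q : ℕ}
    (hder : ∀ k s, 0 < s → HasDerivAt (D k) (D (k + 1) s) s)
    (hD : ∀ ℓ s, 0 < s → s ≤ r → |D ℓ s| ≤ C ℓ * Psi (2 * q + ℓ + 1) s t * y) :
    |∑ ℓ ∈ Finset.range (N + 1), (-1 : ℝ) ^ ℓ * r ^ ℓ / (Nat.factorial ℓ) * D ℓ r| ≤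
      C (N + 1) * r ^ (N + 1) * Psi (2 * q + (N + 1) + 1) r t * y := by
  set g : ℝ → ℝ := fun r =>
    ∑ ℓ ∈ Finset.range (N + 1), (-1 : ℝ) ^ ℓ * r ^ ℓ / (Nat.factorial ℓ) * D ℓ r with hg
  have hterm : ∀ ℓ s, 0 < s → s ≤ r →
      |(-1 : ℝ) ^ ℓ * s ^ ℓ / (Nat.factorial ℓ) * D ℓ s| ≤
        C ℓ * y * (s ^ ℓ * Psi (2 * q + ℓ + 1) s t) := by
    intro ℓ s hs hsr
    have h2 : (1 : ℝ) ≤ Nat.factorial ℓ := by exact_mod_cast Nat.factorial_pos ℓ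
    have h3 : s ^ ℓ / (Nat.factorial ℓ : ℝ) ≤ s ^ ℓ := div_le_self (by positivity) h2
    rw [abs_mul, abs_div, abs_mul, abs_pow, abs_neg, abs_one, one_pow, one_mul, Nat.abs_cast,
      abs_of_nonneg (pow_nonneg hs.le ℓ)]
    calc s ^ ℓ / (Nat.factorial ℓ : ℝ) * |D ℓ s|
        ≤ s ^ ℓ * (C ℓ * Psi (2 * q + ℓ + 1) s t * y) :=
          mul_le_mul h3 (hD ℓ s hs hsr) (abs_nonneg _) (by positivity)
      _ = _ := by ring
  set E := ∑ ℓ ∈ Finset.range (N + 1), C ℓ * y * (Psi (2 * q + ℓ + 1) r t / r) with hE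
  have hE0 : 0 ≤ E := Finset.sum_nonneg fun ℓ _ =>
    mul_nonneg (mul_nonneg (hC ℓ) hy) (div_nonneg (Psi_nonneg ht hr) hr.le)
  have hsmall : ∀ s, 0 < s → s ≤ r → |g s| ≤ s * E := by
    intro s hs hsr
    refine (Finset.abs_sum_le_sum_abs _ _).trans ?_
    rw [hE, Finset.mul_sum]
    refine Finset.sum_le_sum fun ℓ _ => (hterm ℓ s hs hsr).trans ?_
    have h1 := pow_mul_Psi_le ht hs hsr hr1 q ℓ
    have h4 := hC ℓ
    calc C ℓ * y * (s ^ ℓ * Psi (2 * q + ℓ + 1) s t)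
        ≤ C ℓ * y * (s * (Psi (2 * q + ℓ + 1) r t / r)) := by gcongr
      _ = _ := by ring
  set B := C (N + 1) * r ^ N * Psi (2 * q + (N + 1) + 1) r t * y with hB
  have hC' := hC (N + 1)
  have hP := Psi_nonneg (k := 2 * q + (N + 1) + 1) ht hr
  have hB0 : 0 ≤ B := by positivity
  have hgd : ∀ s, 0 < s → s ≤ r →
      |(-1 : ℝ) ^ N * s ^ N / (Nat.factorial N) * D (N + 1) s| ≤ B := by
    intro s hs hsr
    have h2 : (1 : ℝ) ≤ Nat.factorial N := by exact_mod_cast Nat.factorial_pos N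
    have h3 : s ^ N / (Nat.factorial N : ℝ) ≤ r ^ N :=
      (div_le_self (by positivity) h2).trans (pow_le_pow_left₀ hs.le hsr N)
    have h4 := Psi_mono ht hs hsr hr1 (2 * q + (N + 1) + 1)
    rw [abs_mul, abs_div, abs_mul, abs_pow, abs_neg, abs_one, one_pow, one_mul, Nat.abs_cast,
      abs_of_nonneg (pow_nonneg hs.le N)]
    calc s ^ N / (Nat.factorial N : ℝ) * |D (N + 1) s|
        ≤ r ^ N * (C (N + 1) * Psi (2 * q + (N + 1) + 1) s t * y) :=
          mul_le_mul h3 (hD (N + 1) s hs hsr) (abs_nonneg _) (by positivity)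
      _ ≤ r ^ N * (C (N + 1) * Psi (2 * q + (N + 1) + 1) r t * y) := by gcongr
      _ = B := by rw [hB]; ring
  have hmv : ∀ s, 0 < s → s ≤ r → |g r| ≤ B * r + s * E := by
    intro s hs hsr
    have h1 := (convex_Icc s r).norm_image_sub_le_of_norm_hasDerivWithin_le (f := g)
      (f' := fun s => (-1 : ℝ) ^ N * s ^ N / (Nat.factorial N) * D (N + 1) s) (C := B)
      (fun x hx => (hasDerivAt_taylor hder N (hs.trans_le hx.1)).hasDerivWithinAt)
      (fun x hx => hgd x (hs.trans_le hx.1) hx.2) (left_mem_Icc.2 hsr) (right_mem_Icc.2 hsr)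
    rw [Real.norm_eq_abs, Real.norm_eq_abs, abs_of_nonneg (sub_nonneg.2 hsr)] at h1
    have h2 : |g r| ≤ |g r - g s| + |g s| := by
      have := abs_add_le (g r - g s) (g s)
      rwa [sub_add_cancel] at this
    have h3 : B * (r - s) ≤ B * r := mul_le_mul_of_nonneg_left (by linarith) hB0
    linarith [hsmall s hs hsr]
  have hlim : Tendsto (fun s => B * r + s * E) (𝓝[>] 0) (𝓝 (B * r)) := by
    have : Tendsto (fun s : ℝ => B * r + s * E) (𝓝 0) (𝓝 (B * r + 0 * E)) :=
      (Continuous.tendsto (by fun_prop) 0)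
    rw [zero_mul, add_zero] at this
    exact this.mono_left nhdsWithin_le_nhds
  have hfin : |g r| ≤ B * r := by
    refine ge_of_tendsto hlim ?_
    filter_upwards [Ioc_mem_nhdsGT hr] with s hs using hmv s hs.1 hs.2
  calc |g r| ≤ B * r := hfin
    _ = _ := by rw [hB]; ring

end HeatKernel

theorem Phi_estimate (μ ν : ℕ) (hμ : Even μ) (hν : 1 ≤ ν) (b q : ℕ) :
    ∃ C : ℝ, 0 < C ∧ ∀ t r : ℝ, 0 < t → 0 < r → r ≤ 1 →
      |if b = 0 then deriv^[2 * q + 1] (heat μ ν t) r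
        else ∑ ℓ ∈ Finset.range (2 * b),
          (-1 : ℝ) ^ ℓ * r ^ ℓ / (Nat.factorial ℓ) * deriv^[2 * q + ℓ + 1] (heat μ ν t) r| ≤
      C * r ^ (2 * b) * Psi (2 * b + 2 * q + 1) r t * heat μ ν t r := by
  obtain ⟨H, hH, hHe⟩ := heat_eq μ ν
  have hpos : ∀ (t : {t : ℝ // 0 < t}) r, 0 < r → 0 ≤ heat μ ν t r := fun t r hr => by
    rw [hHe t r hr]
    exact (hH 0).nonneg t (Real.one_lt_cosh.2 hr.ne')
  have hder : ∀ (t : {t : ℝ // 0 < t}) k r, 0 < r →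
      HasDerivAt (deriv^[k] (heat μ ν t)) (deriv^[k + 1] (heat μ ν t) r) r := fun t k r hr =>
    hasDerivAt_iterate (h := fun t : {t : ℝ // 0 < t} => heat μ ν t) hH hHe k t hr
  have hbd : ∀ k, ∃ C : ℝ, 0 ≤ C ∧ ∀ (t : {t : ℝ // 0 < t}) (r : ℝ), 0 < r → r ≤ 1 →
      |deriv^[k] (heat μ ν t) r| ≤ C * Psi k r t * heat μ ν t r := fun k => by
    obtain ⟨f, w, hf⟩ :=
      W.iterate_deriv (h := fun t : {t : ℝ // 0 < t} => heat μ ν t) hH hHe k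
    obtain ⟨C, hC, hb⟩ := w.bound hH
    exact ⟨C, hC, fun t r hr hr1 => by rw [hf t r hr, hHe t r hr]; exact hb t r hr hr1⟩
  choose C hC hb using hbd
  obtain ⟨K, hK, hcmp⟩ := harnack hH
  rcases Nat.eq_zero_or_pos b with rfl | hb0
  · refine ⟨C (2 * q + 1) + 1, by linarith [hC (2 * q + 1)], fun t r ht hr hr1 => ?_⟩
    have h1 := hb (2 * q + 1) ⟨t, ht⟩ r hr hr1
    have h2 := hpos ⟨t, ht⟩ r hr
    have h3 := Psi_nonneg (k := 2 * q + 1) ht hr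
    simp only [if_true, mul_zero, pow_zero, mul_one, zero_add] at h1 h2 ⊢
    nlinarith [mul_nonneg h3 h2]
  · set A := 3 * ∑ ℓ ∈ Finset.range (2 * b), C (2 * q + ℓ + 1) with hA
    have hA0 : 0 ≤ A := mul_nonneg (by norm_num) (Finset.sum_nonneg fun ℓ _ => hC _)
    have hC' := hC (2 * q + 2 * b + 1)
    refine ⟨A + C (2 * q + 2 * b + 1) * K + 1, by positivity, fun t r ht hr hr1 => ?_⟩
    rw [if_neg hb0.ne']
    have hy := hpos ⟨t, ht⟩ r hr
    have hP := Psi_nonneg (k := 2 * b + 2 * q + 1) ht hr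
    simp only at hy
    have hY : 0 ≤ r ^ (2 * b) * Psi (2 * b + 2 * q + 1) r t * heat μ ν t r := by positivity
    rcases lt_or_ge t (r ^ 2) with htr | htr
    · have h := sum_bound_of_lt (D := fun ℓ => deriv^[2 * q + ℓ + 1] (heat μ ν t))
        (C := fun ℓ => C (2 * q + ℓ + 1)) (fun ℓ => hC _) ht hr hr1 htr hy (b := b) (q := q)
        (fun ℓ => hb _ ⟨t, ht⟩ r hr hr1)
      refine h.trans ?_
      have := mul_nonneg (mul_nonneg hC' hK) hY
      nlinarith
    · have h := sum_bound_of_le (D := fun ℓ => deriv^[2 * q + ℓ + 1] (heat μ ν t))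
        (C := fun ℓ => C (2 * q + ℓ + 1)) (fun ℓ => hC _) ht hr hr1
        (y := K * heat μ ν t r) (by positivity) (N := 2 * b - 1) (q := q)
        (fun ℓ s hs => by
          have := hder ⟨t, ht⟩ (2 * q + ℓ + 1) s hs
          rwa [show 2 * q + ℓ + 1 + 1 = 2 * q + (ℓ + 1) + 1 by ring] at this)
        (fun ℓ s hs hsr => by
          have h1 := hb (2 * q + ℓ + 1) ⟨t, ht⟩ s hs (hsr.trans hr1)
          have h2 := hcmp ⟨t, ht⟩ s r hs hsr hr1 htr
          rw [← hHe _ s hs, ← hHe _ r hr] at h2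
          exact h1.trans (mul_le_mul_of_nonneg_left h2
            (mul_nonneg (hC _) (Psi_nonneg ht hs))))
      rw [show 2 * b - 1 + 1 = 2 * b by omega] at h
      refine h.trans ?_
      rw [show 2 * q + 2 * b + 1 = 2 * b + 2 * q + 1 by ring] at hC' ⊢
      have := mul_nonneg hA0 hY
      nlinarith

end DR
end
end
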